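/- For every real x with −1/5 < x < 1/5: (1/8)·∑_{n=0}^∞ (−1)^n · 2^{−2(n+x)} · (1/2)_{n+x} (1/4)_{n+x} (3/4)_{n+x} / (1)_{n+x}³ · (20(n+x)+3) = (1/π)·(cos 2πx)/(cos πx) + 4^{−x} · (1/2)_x (1/4)_x (3/4)_x / (1)_x³ · (32x³/(1−2x)) · ∑_{n=0}^∞ (−1)^n · (1/2+2x)_n (1/2+x)_n² / [ (3/2−x)_n (1/2)_n² ] · (2n+1+x)/(2n+1)², where both series converge. -/

import Mathlib

/-!
For a shift `y > 1/2`, a Wilf–Zeilberger pair telescopes the series on the left into a multiple of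
`∑ⱼ wzTerm y j`. By Dougall's bilateral summation, which is Parseval's formula for the Fourier
coefficients of powers of the cosine, `∑ⱼ wzTerm y j + 2 sin²(πy) ∑ᵣ reflTerm y r` is a product of
Gamma values. A second pair shows that `∑ᵣ reflTerm y r` plus a multiple of `∑ₛ altTerm y s` is the
same product, so eliminating `reflTerm` leaves this product times `1 - 2 sin²(πy) = cos(2πy)`
and a multiple of `∑ₛ altTerm y s`. Both sides satisfy the same recurrence in `y ↦ y + 1`, which
carries the identity down to small `x ≠ 0`; there a third pair telescopes `∑ₛ altTerm x s` into the
series on the right. At `x = 0` the recurrence leads to `∑ⱼ wzTerm 1 j`, a case of Gauss' theorem.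
-/

/-- The Pochhammer symbol for real index: `(a)_t = Γ(a+t)/Γ(a)`. -/
noncomputable def pochG (a t : ℝ) : ℝ := Real.Gamma (a + t) / Real.Gamma a

/-- The Pochhammer symbol (rising factorial) `(a)_n = a (a+1) ⋯ (a+n-1)` for real `a`. -/
def pochR (a : ℝ) (n : ℕ) : ℝ := ∏ j ∈ Finset.range n, (a + j)

open Filter Topology MeasureTheory Asymptotics Real

local notation "Γ" => Real.Gamma

/-! ### Sequences of power decay -/

/-- `f n` behaves like `L / n ^ p`. -/
def HasPowerDecay (f : ℕ → ℝ) (p L : ℝ) : Prop :=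
  Tendsto (fun n : ℕ => f n * (n : ℝ) ^ p) atTop (𝓝 L)

namespace HasPowerDecay

variable {f g h : ℕ → ℝ} {p q L M : ℝ}

theorem congr' (hf : HasPowerDecay f p L) (hfg : f =ᶠ[atTop] g) : HasPowerDecay g p L :=
  Tendsto.congr' (hfg.mul .rfl) hf

theorem mul (hf : HasPowerDecay f p L) (hg : HasPowerDecay g q M) :
    HasPowerDecay (fun n => f n * g n) (p + q) (L * M) := by
  refine (Tendsto.mul hf hg).congr' ?_
  filter_upwards [eventually_gt_atTop 0] with n hn
  rw [rpow_add (by positivity)]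
  ring

theorem div (hf : HasPowerDecay f p L) (hg : HasPowerDecay g q M) (hM : M ≠ 0) :
    HasPowerDecay (fun n => f n / g n) (p - q) (L / M) := by
  refine (Tendsto.div hf hg hM).congr' ?_
  filter_upwards [eventually_gt_atTop 0] with n hn
  have hn' : (n : ℝ) ^ q ≠ 0 := by positivity
  rw [rpow_sub (by positivity), Pi.div_apply]
  field_simp

theorem const_mul (hf : HasPowerDecay f p L) (c : ℝ) :
    HasPowerDecay (fun n => c * f n) p (c * L) :=
  (Tendsto.const_mul c hf).congr fun n => by ring

theorem mul_natCast (hf : HasPowerDecay f p L) :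
    HasPowerDecay (fun n => f n * n) (p - 1) L := by
  refine Tendsto.congr' ?_ hf
  filter_upwards [eventually_gt_atTop 0] with n hn
  rw [rpow_sub_one (by positivity)]
  field_simp

theorem squeeze (hf : HasPowerDecay f p L) (hh : HasPowerDecay h p L)
    (hfg : ∀ᶠ n in atTop, f n ≤ g n) (hgh : ∀ᶠ n in atTop, g n ≤ h n) : HasPowerDecay g p L := by
  refine tendsto_of_tendsto_of_tendsto_of_le_of_le' hf hh ?_ ?_
  · filter_upwards [hfg] with n hn using by gcongr
  · filter_upwards [hgh] with n hn using by gcongr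

theorem tendsto_zero (hf : HasPowerDecay f p L) (hp : 0 < p) : Tendsto f atTop (𝓝 0) := by
  have h := Tendsto.mul hf ((tendsto_rpow_neg_atTop hp).comp tendsto_natCast_atTop_atTop)
  rw [mul_zero] at h
  refine h.congr' ?_
  filter_upwards [eventually_gt_atTop 0] with n hn
  rw [Function.comp_apply, mul_assoc, ← rpow_add (by positivity), add_neg_cancel, rpow_zero,
    mul_one]

theorem summable (hf : HasPowerDecay f p L) (hp : 1 < p) : Summable f := by
  refine summable_of_isBigO_nat (summable_nat_rpow_inv.2 hp) ?_
  refine ((hf.isBigO_one ℝ).mul (isBigO_refl (fun n : ℕ => ((n : ℝ) ^ p)⁻¹) atTop)).congr' ?_ ?_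
  · filter_upwards [eventually_gt_atTop 0] with n hn
    exact mul_inv_cancel_right₀ (by positivity) _
  · filter_upwards with n using one_mul _

end HasPowerDecay

theorem hasPowerDecay_const_add_natCast (c : ℝ) : HasPowerDecay (fun n => c + n) (-1) 1 := by
  have h := (tendsto_natCast_div_add_atTop (𝕜 := ℝ) c).inv₀ one_ne_zero
  rw [inv_one] at h
  refine h.congr fun n => ?_
  rw [inv_div, rpow_neg_one, div_eq_mul_inv, add_comm]

/-! ### The Gamma function -/

theorem Gamma_eq_mul_Gamma {a b : ℝ} (h : b = a + 1) (ha : a ≠ 0) : Γ b = a * Γ a := by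
  rw [h, Gamma_add_one ha]

theorem inv_Gamma_eq_mul_inv_Gamma (z : ℝ) : (Γ z)⁻¹ = z * (Γ (z + 1))⁻¹ := by
  rcases eq_or_ne z 0 with rfl | h
  · simp
  · rw [Gamma_add_one h, mul_inv, mul_inv_cancel_left₀ h]

theorem Gamma_add_natCast {a : ℝ} (ha : ∀ m : ℕ, a ≠ -m) (n : ℕ) :
    Γ (a + n) = pochR a n * Γ a := by
  induction n with
  | zero => simp [pochR]
  | succ n ih =>
    rw [Gamma_eq_mul_Gamma (a := a + n) (by push_cast; ring)
      (fun h => ha n (by linear_combination h)), ih, pochR, pochR, Finset.prod_range_succ]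
    ring

theorem hasPowerDecay_Gamma_div_factorial_of_pos {a : ℝ} (ha : 0 < a) :
    HasPowerDecay (fun n => Γ (a + n) / n.factorial) (1 - a) 1 := by
  have hG := (Gamma_pos_of_pos ha).ne'
  have h := ((GammaSeq_tendsto_Gamma a).inv₀ hG).const_mul (Γ a)
  have h' := (tendsto_natCast_div_add_atTop (𝕜 := ℝ) a)
  rw [mul_inv_cancel₀ hG] at h
  replace h := h.mul h'
  rw [mul_one] at h
  refine h.congr' ?_
  filter_upwards [eventually_gt_atTop 0] with n hn
  have hn' : (0 : ℝ) < n := by positivity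
  have hprod : ∏ j ∈ Finset.range n, (a + j) ≠ 0 := by positivity
  rw [Gamma_add_natCast (fun m => by have : (0 : ℝ) ≤ m := m.cast_nonneg
                                     linarith), pochR, GammaSeq, inv_div,
    Finset.prod_range_succ, rpow_sub hn', rpow_one]
  field_simp
  ring

/-- Below `0` the asymptotics is inherited from above through `Γ (a + 1 + n) = (a + n) Γ (a + n)`,
so that the poles of `Γ` do no harm. -/
theorem hasPowerDecay_Gamma_div_factorial (a : ℝ) :
    HasPowerDecay (fun n => Γ (a + n) / n.factorial) (1 - a) 1 := by
  obtain ⟨m, hm⟩ := exists_nat_gt (-a)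
  induction m generalizing a with
  | zero => exact hasPowerDecay_Gamma_div_factorial_of_pos (by simpa using hm)
  | succ m ih =>
    have h := (ih (a + 1) (by push_cast at hm; linarith)).div
      (hasPowerDecay_const_add_natCast a) one_ne_zero
    rw [div_one, show 1 - (a + 1) - -1 = 1 - a by ring] at h
    refine h.congr' ?_
    filter_upwards [tendsto_natCast_atTop_atTop.eventually_gt_atTop (-a)] with n hn
    have hn' : a + n ≠ 0 := by linarith
    rw [Gamma_eq_mul_Gamma (a := a + n) (by ring) hn']
    field_simp

theorem hasPowerDecay_Gamma_div_Gamma (a b : ℝ) :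
    HasPowerDecay (fun n => Γ (a + n) / Γ (b + n)) (b - a) 1 := by
  have h := (hasPowerDecay_Gamma_div_factorial a).div (hasPowerDecay_Gamma_div_factorial b)
    one_ne_zero
  rw [div_one, show 1 - a - (1 - b) = b - a by ring] at h
  refine h.congr' (.of_forall fun n => ?_)
  exact div_div_div_cancel_right₀ (by positivity) _ _

theorem inv_Gamma_one_sub {z : ℝ} (hz : ∀ m : ℕ, z ≠ -m) :
    (Γ (1 - z))⁻¹ = sin (π * z) / π * Γ z := by
  rw [eq_div_of_mul_eq (Gamma_ne_zero hz) ((mul_comm _ _).trans (Gamma_mul_Gamma_one_sub z))]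
  simp only [inv_div, div_div_eq_mul_div]
  ring

theorem norm_inv_Gamma_one_sub_le {z : ℝ} (hz : 0 < z) : ‖(Γ (1 - z))⁻¹‖ ≤ Γ z := by
  have hG := Gamma_pos_of_pos hz
  have hsin : ‖sin (π * z)‖ / π ≤ 1 :=
    (div_le_one pi_pos).2 ((abs_sin_le_one _).trans (by linarith [pi_gt_three]))
  rw [inv_Gamma_one_sub fun m => by linarith [m.cast_nonneg (α := ℝ)], norm_mul, norm_div,
    norm_of_nonneg hG.le, norm_of_nonneg pi_pos.le]
  exact mul_le_of_le_one_left hG.le hsin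

theorem inv_Gamma_one_sub_sub_natCast {a : ℝ} (ha : ∀ m : ℕ, a ≠ -m) (n : ℕ) :
    (Γ (1 - a - n))⁻¹ = (-1) ^ n * (sin (π * a) / π) * Γ (a + n) := by
  rw [sub_sub, inv_Gamma_one_sub fun m h => ha (n + m) (by push_cast; linear_combination h),
    mul_add, mul_comm π n, sin_add_nat_mul_pi]
  ring

theorem tsum_sub_succ_eq {f : ℕ → ℝ} (hf : Summable fun j => f j - f (j + 1))
    (hlim : Tendsto f atTop (𝓝 0)) : ∑' j, (f j - f (j + 1)) = f 0 := by
  refine tendsto_nhds_unique hf.hasSum.tendsto_sum_nat ?_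
  simp_rw [Finset.sum_range_sub']
  simpa using tendsto_const_nhds.sub hlim

theorem tsum_Gamma_div_Gamma {a b : ℝ} (ha : 0 < a) (hab : a + 1 < b) :
    ∑' j : ℕ, Γ (a + j) / Γ (b + j) = Γ a / ((b - a - 1) * Γ (b - 1)) := by
  have hsum : Summable fun j : ℕ => Γ (a + j) / Γ (b + j) :=
    (hasPowerDecay_Gamma_div_Gamma a b).summable (by linarith)
  have hlim : Tendsto (fun j : ℕ => (b - a - 1)⁻¹ * (Γ (a + j) / Γ (b - 1 + j))) atTop (𝓝 0) := by
    simpa using ((hasPowerDecay_Gamma_div_Gamma a (b - 1)).tendsto_zero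
      (by linarith)).const_mul (b - a - 1)⁻¹
  have hdiff (j : ℕ) : Γ (a + j) / Γ (b + j) = (b - a - 1)⁻¹ * (Γ (a + j) / Γ (b - 1 + j)) -
      (b - a - 1)⁻¹ * (Γ (a + (j + 1 : ℕ)) / Γ (b - 1 + (j + 1 : ℕ))) := by
    have := j.cast_nonneg (α := ℝ)
    have hb : b - 1 + j ≠ 0 := by linarith
    have hG := (Gamma_pos_of_pos (show 0 < b - 1 + j by linarith)).ne'
    have hd : b - a - 1 ≠ 0 := by linarith
    rw [Gamma_eq_mul_Gamma (show a + (j + 1 : ℕ) = a + j + 1 by push_cast; ring) (by linarith),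
      show b - 1 + (j + 1 : ℕ) = b + j by push_cast; ring,
      Gamma_eq_mul_Gamma (show b + j = b - 1 + j + 1 by ring) hb]
    field_simp
    ring
  simp_rw [hdiff] at hsum ⊢
  rw [tsum_sub_succ_eq hsum hlim]
  simp only [Nat.cast_zero, add_zero]
  rw [div_mul_eq_div_div_swap, div_eq_inv_mul (Γ a / _)]

theorem Gamma_div_Gamma_antitone {a b : ℝ} (ha : 0 < a) (hab : a ≤ b) :
    Antitone fun j : ℕ => Γ (a + j) / Γ (b + j) := by
  refine antitone_nat_of_succ_le fun j => ?_
  have := j.cast_nonneg (α := ℝ)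
  have := Gamma_pos_of_pos (show 0 < a + j by linarith)
  have := Gamma_pos_of_pos (show 0 < b + j by linarith)
  rw [Gamma_eq_mul_Gamma (show a + (j + 1 : ℕ) = a + j + 1 by push_cast; ring) (by linarith),
    Gamma_eq_mul_Gamma (show b + (j + 1 : ℕ) = b + j + 1 by push_cast; ring) (by linarith),
    mul_div_mul_comm]
  exact mul_le_of_le_one_left (by positivity) ((div_le_one (by linarith)).2 (by linarith))

/-! ### Cauchy's cosine integral -/

theorem intervalIntegrable_one_sub_rpow {s : ℝ} (hs : -1 < s) :
    IntervalIntegrable (fun t => (1 - 2 / π * t) ^ s) volume 0 (π / 2) := by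
  have h : IntervalIntegrable (fun t : ℝ => t ^ s) volume 1 0 :=
    intervalIntegral.intervalIntegrable_rpow' hs
  have hcomp := (h.comp_sub_left 1).comp_mul_left (c := 2 / π)
  simpa [Function.comp_def] using hcomp

/-- For negative `s` the integrand is compared with the power of the chord `1 - 2 t / π` of the
cosine. -/
theorem intervalIntegrable_cos_rpow_right {s : ℝ} (hs : -1 < s) :
    IntervalIntegrable (fun t => cos t ^ s) volume 0 (π / 2) := by
  rcases le_or_gt 0 s with h | h
  · exact (continuous_cos.rpow_const fun _ => .inr h).intervalIntegrable _ _
  · refine (intervalIntegrable_one_sub_rpow hs).mono_fun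
      (by fun_prop : Measurable fun t => cos t ^ s).aestronglyMeasurable ?_
    rw [Set.uIoc_of_le (by positivity), ← restrict_Ioo_eq_restrict_Ioc]
    filter_upwards [ae_restrict_mem measurableSet_Ioo] with t ht
    have hchord : 0 < 1 - 2 / π * t := by
      have := mul_lt_mul_of_pos_left ht.2 (by positivity : 0 < 2 / π)
      rw [show 2 / π * (π / 2) = 1 by field_simp] at this
      linarith
    have hle : 1 - 2 / π * t ≤ cos t := one_sub_mul_le_cos ht.1.le ht.2.le
    rw [norm_of_nonneg (by have := hchord.trans_le hle; positivity),
      norm_of_nonneg (by positivity)]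
    exact rpow_le_rpow_of_nonpos hchord hle h.le

theorem intervalIntegrable_cos_rpow {s : ℝ} (hs : -1 < s) :
    IntervalIntegrable (fun t => cos t ^ s) volume (-(π / 2)) (π / 2) := by
  have hright := intervalIntegrable_cos_rpow_right hs
  have hleft := (hright.comp_sub_left 0).symm
  simp only [zero_sub, cos_neg, neg_zero] at hleft
  exact hleft.trans hright

theorem intervalIntegrable_cos_rpow_mul {s : ℝ} (hs : -1 < s) {g : ℝ → ℝ} (hg : Continuous g) :
    IntervalIntegrable (fun t => cos t ^ s * g t) volume (-(π / 2)) (π / 2) :=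
  (intervalIntegrable_cos_rpow hs).mul_continuousOn hg.continuousOn

theorem cos_rpow_add_two {t : ℝ} (ht : 0 < cos t) (s : ℝ) :
    cos t ^ (s + 2) = cos t ^ s * cos t ^ 2 := by
  rw [rpow_add ht, rpow_two]

/-- Cauchy's cosine integral, the (two-sided) Fourier transform of `cos ^ s`. -/
noncomputable def cosInt (s u : ℝ) : ℝ :=
  ∫ t in (-(π / 2))..(π / 2), cos t ^ s * cos (2 * u * t)

theorem hasDerivAt_cosInt_primitive {t : ℝ} (ht : 0 < cos t) (s u : ℝ) :
    HasDerivAt (fun t => 2 * u * cos t ^ (s + 2) * sin (2 * u * t) -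
        (s + 2) * cos t ^ (s + 1) * sin t * cos (2 * u * t))
      ((s + 2) * (s + 1) * (cos t ^ s * cos (2 * u * t)) -
        ((s + 2) ^ 2 - (2 * u) ^ 2) * (cos t ^ (s + 2) * cos (2 * u * t))) t := by
  have hpow (p : ℝ) := (hasDerivAt_cos t).rpow_const (p := p) (.inl ht.ne')
  have hlin : HasDerivAt (fun t : ℝ => 2 * u * t) (2 * u) t := by
    simpa using (hasDerivAt_id t).const_mul (2 * u)
  refine ((((hpow (s + 2)).const_mul (2 * u)).mul hlin.sin).sub
    ((((hpow (s + 1)).const_mul (s + 2)).mul (hasDerivAt_sin t)).mul hlin.cos)).congr_deriv ?_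
  rw [Pi.mul_apply, show s + 2 - 1 = s + 1 by ring, add_sub_cancel_right, cos_rpow_add_two ht,
    rpow_add_one ht.ne']
  linear_combination (s + 2) * (s + 1) * cos t ^ s * cos (2 * u * t) * sin_sq t

/-- Integration by parts, twice. -/
theorem cosInt_add_two {s : ℝ} (hs : -1 < s) (u : ℝ) :
    ((s + 2) ^ 2 - (2 * u) ^ 2) * cosInt (s + 2) u = (s + 2) * (s + 1) * cosInt s u := by
  have hI (r : ℝ) (hr : -1 < r) := intervalIntegrable_cos_rpow_mul hr
    (g := fun t => cos (2 * u * t)) (by fun_prop)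
  have hI₀ := (hI s hs).const_mul ((s + 2) * (s + 1))
  have hI₂ := (hI (s + 2) (by linarith)).const_mul ((s + 2) ^ 2 - (2 * u) ^ 2)
  have hcont (p : ℝ) (hp : 0 ≤ p) : Continuous fun t => cos t ^ p :=
    continuous_cos.rpow_const fun t => .inr hp
  have := hcont (s + 2) (by linarith)
  have := hcont (s + 1) (by linarith)
  have key := intervalIntegral.integral_eq_sub_of_hasDerivAt_of_le (by linarith [pi_pos])
    (Continuous.continuousOn (by fun_prop))
    (fun t ht => hasDerivAt_cosInt_primitive (cos_pos_of_mem_Ioo ht) s u) (hI₀.sub hI₂)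
  rw [intervalIntegral.integral_sub hI₀ hI₂, intervalIntegral.integral_const_mul,
    intervalIntegral.integral_const_mul] at key
  simp only [cos_neg, cos_pi_div_two, zero_rpow (show s + 2 ≠ 0 by linarith),
    zero_rpow (show s + 1 ≠ 0 by linarith)] at key
  unfold cosInt
  linear_combination -key

theorem cosInt_zero_right (s : ℝ) : cosInt s 0 = ∫ t in (-(π / 2))..(π / 2), cos t ^ s := by
  simp [cosInt]

theorem cosInt_zero_zero : cosInt 0 0 = π := by
  simp [cosInt]

theorem cosInt_zero_right_antitoneOn : AntitoneOn (cosInt · 0) (Set.Ioi (-1)) := by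
  intro s hs s' hs' h
  rw [Set.mem_Ioi] at hs hs'
  simp only [cosInt_zero_right]
  refine intervalIntegral.integral_mono_on_of_le_Ioo (by linarith [pi_pos])
    (intervalIntegrable_cos_rpow hs') (intervalIntegrable_cos_rpow hs) fun t ht => ?_
  exact rpow_le_rpow_of_exponent_ge (cos_pos_of_mem_Ioo ht) (cos_le_one t) h

theorem cosInt_zero_sub_cosInt_add_two {s : ℝ} (hs : -1 < s) :
    cosInt s 0 - cosInt (s + 2) 0 = cosInt s 0 / (s + 2) := by
  have hs₂ : s + 2 ≠ 0 := by linarith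
  have h : (s + 2) * cosInt (s + 2) 0 = (s + 1) * cosInt s 0 :=
    mul_left_cancel₀ hs₂ (by linear_combination cosInt_add_two hs 0)
  field_simp
  linear_combination -h

theorem one_sub_cos_le_sin_sq (u : ℝ) {t : ℝ} (ht : |t| ≤ π / 2) :
    1 - cos (2 * u * t) ≤ u ^ 2 * π ^ 2 / 2 * sin t ^ 2 := by
  have habs : |t| ≤ π / 2 * |sin t| := by
    have := mul_abs_le_abs_sin ht
    calc |t| = π / 2 * (2 / π * |t|) := by field_simp
      _ ≤ _ := by gcongr
  have hsq : t ^ 2 ≤ (π / 2) ^ 2 * sin t ^ 2 := by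
    simpa only [mul_pow, sq_abs] using pow_le_pow_left₀ (abs_nonneg t) habs 2
  linarith [one_sub_sq_div_two_le_cos (x := 2 * u * t),
    mul_le_mul_of_nonneg_left hsq (sq_nonneg u)]

theorem cosInt_zero_sub_cosInt {s : ℝ} (hs : -1 < s) (u : ℝ) :
    cosInt s 0 - cosInt s u =
      ∫ t in (-(π / 2))..(π / 2), cos t ^ s * (1 - cos (2 * u * t)) := by
  rw [cosInt_zero_right, cosInt, ← intervalIntegral.integral_sub (intervalIntegrable_cos_rpow hs)
    (intervalIntegrable_cos_rpow_mul hs (by fun_prop))]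
  simp only [mul_sub, mul_one]

theorem cosInt_le_cosInt_zero {s : ℝ} (hs : -1 < s) (u : ℝ) : cosInt s u ≤ cosInt s 0 := by
  rw [← sub_nonneg, cosInt_zero_sub_cosInt hs]
  refine intervalIntegral.integral_nonneg (by linarith [pi_pos]) fun t ht => ?_
  have := cos_nonneg_of_mem_Icc ht
  have := sub_nonneg.2 (cos_le_one (2 * u * t))
  positivity

theorem cosInt_zero_sub_cosInt_le {s : ℝ} (hs : -1 < s) (u : ℝ) :
    cosInt s 0 - cosInt s u ≤ u ^ 2 * π ^ 2 / 2 * (cosInt s 0 / (s + 2)) := by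
  rw [← cosInt_zero_sub_cosInt_add_two hs, cosInt_zero_sub_cosInt hs, cosInt_zero_right,
    cosInt_zero_right, ← intervalIntegral.integral_sub (intervalIntegrable_cos_rpow hs)
    (intervalIntegrable_cos_rpow (by linarith)), ← intervalIntegral.integral_const_mul]
  refine intervalIntegral.integral_mono_on_of_le_Ioo (by linarith [pi_pos])
    (intervalIntegrable_cos_rpow_mul hs (by fun_prop)) (((intervalIntegrable_cos_rpow hs).sub
    (intervalIntegrable_cos_rpow (by linarith))).const_mul _) fun t ht => ?_
  have hcos := cos_pos_of_mem_Ioo ht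
  have hle := one_sub_cos_le_sin_sq u (abs_le.2 ⟨ht.1.le, ht.2.le⟩)
  rw [cos_rpow_add_two hcos]
  calc cos t ^ s * (1 - cos (2 * u * t)) ≤ cos t ^ s * (u ^ 2 * π ^ 2 / 2 * sin t ^ 2) := by
        gcongr
    _ = _ := by rw [sin_sq]; ring

/-- The value of `cosInt s u`. -/
noncomputable def cosIntVal (s u : ℝ) : ℝ :=
  π * 2 ^ (-s) * Γ (s + 1) * (Γ (1 + s / 2 + u))⁻¹ * (Γ (1 + s / 2 - u))⁻¹

theorem cosIntVal_add_two {s : ℝ} (hs : -1 < s) (u : ℝ) :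
    ((s + 2) ^ 2 - (2 * u) ^ 2) * cosIntVal (s + 2) u = (s + 2) * (s + 1) * cosIntVal s u := by
  have hpow : (2 : ℝ) ^ (-(s + 2)) = 2 ^ (-s) / 4 := by
    rw [neg_add, ← sub_eq_add_neg, rpow_sub two_pos, rpow_two]
    norm_num
  unfold cosIntVal
  rw [inv_Gamma_eq_mul_inv_Gamma (1 + s / 2 + u), inv_Gamma_eq_mul_inv_Gamma (1 + s / 2 - u),
    Gamma_eq_mul_Gamma (show s + 2 + 1 = s + 2 + 1 from rfl) (by linarith),
    Gamma_eq_mul_Gamma (show s + 2 = s + 1 + 1 by ring) (by linarith), hpow,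
    show 1 + (s + 2) / 2 + u = 1 + s / 2 + u + 1 by ring,
    show 1 + (s + 2) / 2 - u = 1 + s / 2 - u + 1 by ring]
  ring

theorem cosInt_two_mul_natCast (N : ℕ) : cosInt (2 * N) 0 = cosIntVal (2 * N) 0 := by
  induction N with
  | zero => simp [cosInt_zero_zero, cosIntVal]
  | succ N ih =>
    have hN : (-1 : ℝ) < 2 * N := by linarith [N.cast_nonneg (α := ℝ)]
    have h := cosInt_add_two hN 0
    rw [ih, ← cosIntVal_add_two hN 0] at h
    have hne : (2 * (N : ℝ) + 2) ^ 2 - (2 * 0) ^ 2 ≠ 0 := by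
      rw [mul_zero, zero_pow two_ne_zero, sub_zero]
      positivity
    simpa [mul_add] using mul_left_cancel₀ hne h

theorem cosIntVal_add_two_mul_natCast (s u : ℝ) (N : ℕ) :
    cosIntVal (s + 2 * N) u = √π * (Γ ((s + 1) / 2 + N) / Γ (1 + s / 2 + u + N) *
      (Γ (1 + s / 2 + N) / Γ (1 + s / 2 - u + N))) := by
  have h := Gamma_mul_Gamma_add_half ((s + 1) / 2 + N)
  rw [show (s + 1) / 2 + (N : ℝ) + 1 / 2 = 1 + s / 2 + N by ring,
    show 2 * ((s + 1) / 2 + (N : ℝ)) = s + 2 * N + 1 by ring,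
    show 1 - (s + 2 * N + 1) = -(s + 2 * (N : ℝ)) by ring] at h
  rw [div_mul_div_comm, h, cosIntVal,
    show 1 + (s + 2 * (N : ℝ)) / 2 + u = 1 + s / 2 + u + N by ring,
    show 1 + (s + 2 * (N : ℝ)) / 2 - u = 1 + s / 2 - u + N by ring]
  nth_rw 1 [← mul_self_sqrt pi_pos.le]
  ring

theorem hasPowerDecay_cosIntVal (s u : ℝ) :
    HasPowerDecay (fun N => cosIntVal (s + 2 * N) u) (1 / 2) √π := by
  have h := ((hasPowerDecay_Gamma_div_Gamma ((s + 1) / 2) (1 + s / 2 + u)).mul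
    (hasPowerDecay_Gamma_div_Gamma (1 + s / 2) (1 + s / 2 - u))).const_mul √π
  rw [mul_one, mul_one, show 1 + s / 2 + u - (s + 1) / 2 + (1 + s / 2 - u - (1 + s / 2)) = 1 / 2
    by ring] at h
  exact h.congr' (.of_forall fun N => (cosIntVal_add_two_mul_natCast s u N).symm)

theorem hasPowerDecay_cosInt_zero {s : ℝ} (hs : -1 < s) :
    HasPowerDecay (fun N => cosInt (s + 2 * N) 0) (1 / 2) √π := by
  obtain ⟨m, hm⟩ := exists_nat_ge (s / 2)
  refine (hasPowerDecay_cosIntVal (2 * m) 0).squeeze (hasPowerDecay_cosIntVal (-2) 0) ?_ ?_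
  · refine .of_forall fun N => ?_
    have := N.cast_nonneg (α := ℝ)
    have h := cosInt_two_mul_natCast (m + N)
    rw [Nat.cast_add, mul_add] at h
    rw [← h]
    exact cosInt_zero_right_antitoneOn (Set.mem_Ioi.2 (by linarith))
      (Set.mem_Ioi.2 (by linarith)) (by linarith)
  · filter_upwards [eventually_ge_atTop 1] with N hN
    obtain ⟨M, rfl⟩ := Nat.exists_eq_add_of_le' hN
    have := M.cast_nonneg (α := ℝ)
    rw [show -2 + 2 * ((M + 1 : ℕ) : ℝ) = 2 * M by push_cast; ring, ← cosInt_two_mul_natCast]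
    push_cast
    exact cosInt_zero_right_antitoneOn (Set.mem_Ioi.2 (by linarith))
      (Set.mem_Ioi.2 (by linarith)) (by linarith)

theorem hasPowerDecay_cosInt {s : ℝ} (hs : -1 < s) (u : ℝ) :
    HasPowerDecay (fun N => cosInt (s + 2 * N) u) (1 / 2) √π := by
  have h₀ := hasPowerDecay_cosInt_zero hs
  have hquot : Tendsto (fun N : ℕ => u ^ 2 * π ^ 2 / 2 / (s + 2 * N + 2)) atTop (𝓝 0) :=
    tendsto_const_nhds.div_atTop <| tendsto_atTop_add_const_right _ _ <|
      tendsto_atTop_add_const_left _ _ (tendsto_natCast_atTop_atTop.const_mul_atTop two_pos)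
  have hlow : HasPowerDecay
      (fun N : ℕ => (1 - u ^ 2 * π ^ 2 / 2 / (s + 2 * N + 2)) * cosInt (s + 2 * N) 0)
      (1 / 2) √π := by
    have := (hquot.const_sub 1).mul h₀
    rw [sub_zero, one_mul] at this
    exact this.congr fun N => by ring
  refine hlow.squeeze h₀ (.of_forall fun N => ?_) (.of_forall fun N => ?_)
  all_goals have hN : -1 < s + 2 * N := by linarith [N.cast_nonneg (α := ℝ)]
  · linear_combination cosInt_zero_sub_cosInt_le hN u
  · exact cosInt_le_cosInt_zero hN u

theorem cosInt_mul_cosIntVal_add {s : ℝ} (hs : -1 < s) (u : ℝ) (N : ℕ) :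
    cosInt s u * cosIntVal (s + 2 * N) u = cosIntVal s u * cosInt (s + 2 * N) u := by
  induction N generalizing s with
  | zero => simp [mul_comm]
  | succ N ih =>
    have h := ih (show -1 < s + 2 by linarith)
    have hne : (s + 2) * (s + 1) ≠ 0 := mul_ne_zero (by linarith) (by linarith)
    rw [show s + 2 * ((N + 1 : ℕ) : ℝ) = s + 2 + 2 * N by push_cast; ring]
    refine mul_left_cancel₀ hne ?_
    rw [← mul_assoc, ← mul_assoc, ← cosInt_add_two hs, ← cosIntVal_add_two hs, mul_assoc, h,
      ← mul_assoc]

/-- Both sides obey the same recurrence in `s` and have the same asymptotics. -/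
theorem cosInt_eq_cosIntVal {s : ℝ} (hs : -1 < s) (u : ℝ) : cosInt s u = cosIntVal s u := by
  have hI := (hasPowerDecay_cosInt hs u).const_mul (cosIntVal s u)
  have hV := (hasPowerDecay_cosIntVal s u).const_mul (cosInt s u)
  refine mul_right_cancel₀ (sqrt_pos.2 pi_pos).ne' (tendsto_nhds_unique (hV.congr fun N => ?_) hI)
  simp only [cosInt_mul_cosIntVal_add hs]

/-! ### Fourier expansion of powers of the cosine -/

theorem summable_inv_Gamma_sub_mul_inv_Gamma_add_natCast {α β : ℝ} (h : 2 < α + β) :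
    Summable fun n : ℕ => (Γ (α - n))⁻¹ * (Γ (β + n))⁻¹ := by
  have hdom : Summable fun n : ℕ => Γ (1 - α + n) / Γ (β + n) :=
    (hasPowerDecay_Gamma_div_Gamma (1 - α) β).summable (by linarith)
  refine Summable.of_norm_bounded_eventually_nat hdom ?_
  filter_upwards [tendsto_natCast_atTop_atTop.eventually_gt_atTop (α - 1),
    tendsto_natCast_atTop_atTop.eventually_gt_atTop (-β)] with n hα hβ
  have hle := norm_inv_Gamma_one_sub_le (show 0 < 1 - α + n by linarith)
  have hG := Gamma_pos_of_pos (neg_lt_iff_pos_add'.1 hβ)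
  rw [show 1 - (1 - α + n) = α - (n : ℝ) by ring] at hle
  rw [norm_mul, norm_inv (Γ (β + n)), norm_of_nonneg hG.le, div_eq_mul_inv]
  gcongr

theorem summable_inv_Gamma_sub_mul_inv_Gamma_add {α β : ℝ} (h : 2 < α + β) :
    Summable fun j : ℤ => (Γ (α - j))⁻¹ * (Γ (β + j))⁻¹ := by
  refine Summable.of_nat_of_neg ?_ ?_
  · simpa using summable_inv_Gamma_sub_mul_inv_Gamma_add_natCast h
  · simpa [mul_comm, ← sub_eq_add_neg] using
      summable_inv_Gamma_sub_mul_inv_Gamma_add_natCast (show 2 < β + α by linarith)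

theorem summable_cosInt_sub_intCast {s : ℝ} (hs : 0 < s) (u : ℝ) :
    Summable fun j : ℤ => cosInt s (u - j) := by
  have h := (summable_inv_Gamma_sub_mul_inv_Gamma_add (α := 1 + s / 2 + u) (β := 1 + s / 2 - u)
    (by linarith)).mul_left (π * 2 ^ (-s) * Γ (s + 1))
  refine h.congr fun j => ?_
  rw [cosInt_eq_cosIntVal (by linarith), cosIntVal, add_sub_assoc, ← sub_add]
  ring

theorem integral_cos_rpow_mul_cexp {s : ℝ} (hs : -1 < s) (u : ℝ) :
    ∫ t in (-(π / 2))..(π / 2), ((cos t ^ s : ℝ) : ℂ) * Complex.exp (2 * u * t * Complex.I) =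
      cosInt s u := by
  have hI (g : ℝ → ℝ) (hg : Continuous g) :
      IntervalIntegrable (fun t => ((cos t ^ s * g t : ℝ) : ℂ)) volume (-(π / 2)) (π / 2) :=
    have := intervalIntegrable_cos_rpow_mul hs hg
    ⟨this.1.ofReal, this.2.ofReal⟩
  have hodd : ∫ t in (-(π / 2))..(π / 2), cos t ^ s * sin (2 * u * t) = 0 := by
    have := intervalIntegral.integral_comp_neg (a := -(π / 2)) (b := π / 2)
      (fun t => cos t ^ s * sin (2 * u * t))
    simp only [cos_neg, mul_neg, sin_neg, neg_neg, intervalIntegral.integral_neg] at this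
    linarith
  have hEuler (t : ℝ) : ((cos t ^ s : ℝ) : ℂ) * Complex.exp (2 * u * t * Complex.I) =
      ((cos t ^ s * cos (2 * u * t) : ℝ) : ℂ) +
        ((cos t ^ s * sin (2 * u * t) : ℝ) : ℂ) * Complex.I := by
    rw [Complex.exp_mul_I]
    push_cast
    ring
  simp_rw [hEuler]
  rw [intervalIntegral.integral_add (hI _ (by fun_prop)) ((hI _ (by fun_prop)).mul_const _),
    intervalIntegral.integral_mul_const, intervalIntegral.integral_ofReal,
    intervalIntegral.integral_ofReal, hodd]
  simp [cosInt]

theorem fourier_coe_pi_apply (j : ℤ) (t : ℝ) :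
    fourier j (t : AddCircle π) = Complex.exp (2 * j * t * Complex.I) := by
  rw [fourier_coe_apply]
  congr 1
  have : (π : ℂ) ≠ 0 := by exact_mod_cast pi_ne_zero
  field_simp

theorem fourierCoeff_eq_cosInt [Fact (0 < π)] {s : ℝ} (hs : -1 < s) (u : ℝ) {F : AddCircle π → ℂ}
    (hF : ∀ t ∈ Set.Ioc (-(π / 2)) (π / 2),
      F t = ((cos t ^ s : ℝ) : ℂ) * Complex.exp (2 * u * t * Complex.I)) (j : ℤ) :
    fourierCoeff F j = ((1 / π * cosInt s (u - j) : ℝ) : ℂ) := by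
  rw [fourierCoeff_eq_intervalIntegral _ _ (-(π / 2)), show -(π / 2) + π = π / 2 by ring,
    Complex.ofReal_mul, ← integral_cos_rpow_mul_cexp hs, Complex.real_smul]
  congr 1
  refine intervalIntegral.integral_congr_ae (ae_of_all _ fun t ht => ?_)
  rw [Set.uIoc_of_le (by linarith [pi_pos])] at ht
  rw [hF t ht, fourier_coe_pi_apply, smul_eq_mul, mul_left_comm, ← Complex.exp_add]
  push_cast
  ring_nf

theorem hasSum_cosInt_mul_cexp {s : ℝ} (hs : 0 < s) (u : ℝ) {t : ℝ}
    (ht : t ∈ Set.Ioc (-(π / 2)) (π / 2)) :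
    HasSum (fun j : ℤ => ((1 / π * cosInt s (u - j) : ℝ) : ℂ) * Complex.exp (2 * j * t * Complex.I))
      (((cos t ^ s : ℝ) : ℂ) * Complex.exp (2 * u * t * Complex.I)) := by
  have : Fact (0 < π) := ⟨pi_pos⟩
  have hab : -(π / 2) + π = π / 2 := by ring
  set f : ℝ → ℂ := fun t => ((cos t ^ s : ℝ) : ℂ) * Complex.exp (2 * u * t * Complex.I) with hf
  have hcont : Continuous f := by
    have := continuous_cos.rpow_const fun _ => .inr hs.le
    fun_prop
  have hend : f (-(π / 2)) = f (-(π / 2) + π) := by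
    simp [hf, hab, zero_rpow hs.ne']
  let F : C(AddCircle π, ℂ) :=
    ⟨AddCircle.liftIoc π (-(π / 2)) f, AddCircle.liftIoc_continuous hend hcont.continuousOn⟩
  have hF (t : ℝ) (ht : t ∈ Set.Ioc (-(π / 2)) (π / 2)) : F t = f t :=
    AddCircle.liftIoc_coe_apply (f := f) (by rwa [hab])
  have hcoeff := fourierCoeff_eq_cosInt (by linarith) u hF
  have hsum : Summable (fourierCoeff F) := by
    simp_rw [funext hcoeff]
    exact Complex.summable_ofReal.2 ((summable_cosInt_sub_intCast hs u).mul_left (1 / π))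
  have key := has_pointwise_sum_fourier_series_of_summable hsum (t : AddCircle π)
  simpa only [hF t ht, hcoeff, fourier_coe_pi_apply, smul_eq_mul] using key

theorem hasSum_mul_integral_of_norm_le_one {α : Type*} [MeasurableSpace α] {μ : Measure α}
    {c : ℤ → ℂ} {e : ℤ → α → ℂ} {f g : α → ℂ} (hc : Summable c)
    (he : ∀ j, AEStronglyMeasurable (e j) μ) (he_le : ∀ j t, ‖e j t‖ ≤ 1) (hg : Integrable g μ)
    (hf : ∀ᵐ t ∂μ, HasSum (fun j => c j * e j t) (f t)) :
    HasSum (fun j => c j * ∫ t, e j t * g t ∂μ) (∫ t, f t * g t ∂μ) := by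
  have hint (j : ℤ) : Integrable (fun t => c j * (e j t * g t)) μ :=
    (hg.bdd_mul (he j) (ae_of_all μ (he_le j))).const_mul (c j)
  have hnorm (j : ℤ) : ∫ t, ‖c j * (e j t * g t)‖ ∂μ ≤ ‖c j‖ * ∫ t, ‖g t‖ ∂μ := by
    rw [← integral_const_mul ‖c j‖ fun t => ‖g t‖]
    refine integral_mono (hint j).norm (hg.norm.const_mul _) fun t => ?_
    rw [norm_mul, norm_mul]
    gcongr
    exact mul_le_of_le_one_left (norm_nonneg _) (he_le j t)
  have key := hasSum_integral_of_summable_integral_norm hint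
    (.of_nonneg_of_le (fun j => by positivity) hnorm (hc.norm.mul_right _))
  simp_rw [integral_const_mul] at key
  have hfg : ∫ t, f t * g t ∂μ = ∫ t, ∑' j, c j * (e j t * g t) ∂μ := by
    refine integral_congr_ae ?_
    filter_upwards [hf] with t ht
    rw [← (ht.mul_right (g t)).tsum_eq]
    simp only [mul_assoc]
  exact hfg ▸ key

theorem hasSum_cosInt_mul_cosInt {s₁ s₂ : ℝ} (h₁ : 0 < s₁) (h₂ : -1 < s₂) (u₁ u₂ : ℝ) :
    HasSum (fun j : ℤ => 1 / π * cosInt s₁ (u₁ - j) * cosInt s₂ (u₂ + j))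
      (cosInt (s₁ + s₂) (u₁ + u₂)) := by
  have hle : -(π / 2) ≤ π / 2 := by linarith [pi_pos]
  set g : ℝ → ℂ := fun t => ((cos t ^ s₂ : ℝ) : ℂ) * Complex.exp (2 * u₂ * t * Complex.I) with hg
  have hgint : IntegrableOn g (Set.Ioo (-(π / 2)) (π / 2)) := by
    refine (intervalIntegrable_iff_integrableOn_Ioo_of_le hle).1
      (.mul_continuousOn ?_ (Continuous.continuousOn (by fun_prop)))
    exact ⟨(intervalIntegrable_cos_rpow h₂).1.ofReal, (intervalIntegrable_cos_rpow h₂).2.ofReal⟩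
  have key := hasSum_mul_integral_of_norm_le_one
    (e := fun (j : ℤ) (t : ℝ) => Complex.exp (2 * j * t * Complex.I))
    (Complex.summable_ofReal.2 ((summable_cosInt_sub_intCast h₁ u₁).mul_left (1 / π)))
    (fun j => Continuous.aestronglyMeasurable (by fun_prop))
    (fun j t => by
      rw [show 2 * (j : ℂ) * t * Complex.I = ((2 * j * t : ℝ) : ℂ) * Complex.I by push_cast; ring,
        Complex.norm_exp_ofReal_mul_I])
    hgint ((ae_restrict_iff' measurableSet_Ioo).2 <| ae_of_all _ fun t ht =>
      hasSum_cosInt_mul_cexp h₁ u₁ (Set.Ioo_subset_Ioc_self ht))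
  have hterm (j : ℤ) : ∫ t in Set.Ioo (-(π / 2)) (π / 2),
      Complex.exp (2 * j * t * Complex.I) * g t = (cosInt s₂ (u₂ + j) : ℂ) := by
    rw [← integral_cos_rpow_mul_cexp h₂, intervalIntegral.integral_of_le hle,
      integral_Ioc_eq_integral_Ioo]
    refine integral_congr_ae (ae_of_all _ fun t => ?_)
    simp only [hg]
    rw [mul_left_comm, ← Complex.exp_add]
    push_cast
    ring_nf
  have hval : ∫ t in Set.Ioo (-(π / 2)) (π / 2),
      ((cos t ^ s₁ : ℝ) : ℂ) * Complex.exp (2 * u₁ * t * Complex.I) * g t =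
        (cosInt (s₁ + s₂) (u₁ + u₂) : ℂ) := by
    rw [← integral_cos_rpow_mul_cexp (by linarith), intervalIntegral.integral_of_le hle,
      integral_Ioc_eq_integral_Ioo]
    refine setIntegral_congr_fun measurableSet_Ioo fun t ht => ?_
    simp only [hg]
    rw [mul_mul_mul_comm, ← Complex.exp_add, ← Complex.ofReal_mul,
      ← rpow_add (cos_pos_of_mem_Ioo ht)]
    push_cast
    ring_nf
  rw [hval] at key
  simp_rw [hterm] at key
  exact_mod_cast key

/-! ### Dougall's bilateral sum -/

/-- The general term of Dougall's bilateral series `₂H₂(a, b; c, d; 1)`, normalised so that it is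
entire in the parameters: `Γ(a + j)` and `Γ(b + j)` are traded for `1 / Γ(1 - a - j)` and
`1 / Γ(1 - b - j)` by reflection. -/
noncomputable def bilateralTerm (a b c d : ℝ) (j : ℤ) : ℝ :=
  (Γ (1 - a - j))⁻¹ * (Γ (c + j))⁻¹ * ((Γ (1 - b - j))⁻¹ * (Γ (d + j))⁻¹)

theorem hasSum_bilateralTerm {a b c d : ℝ} (hac : a + 1 < c) (hbd : b < d) :
    HasSum (bilateralTerm a b c d)
      (Γ (c + d - a - b - 1) / (Γ (c - a) * Γ (c - b) * Γ (d - a) * Γ (d - b))) := by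
  have hca := Gamma_pos_of_pos (show 0 < c - a by linarith)
  have hdb := Gamma_pos_of_pos (show 0 < d - b by linarith)
  set K := π * 2 ^ (-(c - a - 1)) * 2 ^ (-(d - b - 1)) * Γ (c - a) * Γ (d - b) with hK
  have hterm (j : ℤ) : bilateralTerm a b c d j = K⁻¹ * (1 / π *
      cosInt (c - a - 1) ((1 - a - c) / 2 - j) * cosInt (d - b - 1) ((d + b - 1) / 2 + j)) := by
    rw [cosInt_eq_cosIntVal (by linarith), cosInt_eq_cosIntVal (by linarith), cosIntVal, cosIntVal,
      show 1 + (c - a - 1) / 2 + ((1 - a - c) / 2 - j) = 1 - a - j by ring,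
      show 1 + (c - a - 1) / 2 - ((1 - a - c) / 2 - j) = c + j by ring,
      show 1 + (d - b - 1) / 2 + ((d + b - 1) / 2 + j) = d + j by ring,
      show 1 + (d - b - 1) / 2 - ((d + b - 1) / 2 + j) = 1 - b - j by ring,
      sub_add_cancel, sub_add_cancel, bilateralTerm, hK]
    field_simp
  have hval : Γ (c + d - a - b - 1) / (Γ (c - a) * Γ (c - b) * Γ (d - a) * Γ (d - b)) =
      K⁻¹ * cosInt (c - a - 1 + (d - b - 1)) ((1 - a - c) / 2 + (d + b - 1) / 2) := by
    rw [cosInt_eq_cosIntVal (by linarith), cosIntVal, neg_add (c - a - 1), rpow_add two_pos,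
      show 1 + (c - a - 1 + (d - b - 1)) / 2 + ((1 - a - c) / 2 + (d + b - 1) / 2) = d - a by ring,
      show 1 + (c - a - 1 + (d - b - 1)) / 2 - ((1 - a - c) / 2 + (d + b - 1) / 2) = c - b by ring,
      show c - a - 1 + (d - b - 1) + 1 = c + d - a - b - 1 by ring, hK]
    field_simp
  rw [hval, funext hterm]
  exact (hasSum_cosInt_mul_cosInt (by linarith) (by linarith) _ _).mul_left _

theorem bilateralTerm_neg_add_one (a b c d : ℝ) (r : ℕ) :
    bilateralTerm a b c d (-(r + 1)) = bilateralTerm (2 - c) (2 - d) (2 - a) (2 - b) r := by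
  simp only [bilateralTerm]
  push_cast
  ring_nf

/-- The general term of the hypergeometric series `₂H₂(a, b; c, d; 1)`, not normalised by its
value at `j = 0`. -/
noncomputable def hyperTerm (a b c d : ℝ) (j : ℕ) : ℝ :=
  Γ (a + j) * Γ (b + j) / (Γ (c + j) * Γ (d + j))

theorem hasPowerDecay_hyperTerm (a b c d : ℝ) :
    HasPowerDecay (hyperTerm a b c d) (c + d - a - b) 1 := by
  have h := (hasPowerDecay_Gamma_div_Gamma a c).mul (hasPowerDecay_Gamma_div_Gamma b d)
  rw [mul_one, show c - a + (d - b) = c + d - a - b by ring] at h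
  exact h.congr' (.of_forall fun j => div_mul_div_comm ..)

theorem summable_hyperTerm {a b c d : ℝ} (h : a + b + 1 < c + d) :
    Summable (hyperTerm a b c d) :=
  (hasPowerDecay_hyperTerm a b c d).summable (by linarith)

theorem hyperTerm_nonneg {a b c d : ℝ} (ha : 0 < a) (hb : 0 < b) (hc : 0 < c) (hd : 0 < d)
    (j : ℕ) : 0 ≤ hyperTerm a b c d j := by
  have (z : ℝ) (hz : 0 < z) : 0 < Γ (z + j) := Gamma_pos_of_pos (by positivity)
  exact div_nonneg (mul_pos (this a ha) (this b hb)).le (mul_pos (this c hc) (this d hd)).le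

theorem tsum_hyperTerm_le {a b c d : ℝ} (ha : 0 < a) (hac : a ≤ c) (hb : 0 < b) (hbd : b + 1 < d) :
    ∑' j, hyperTerm a b c d j ≤ Γ a / Γ c * (Γ b / ((d - b - 1) * Γ (d - 1))) := by
  rw [← tsum_Gamma_div_Gamma hb hbd, ← tsum_mul_left]
  refine (summable_hyperTerm (by linarith)).tsum_le_tsum (fun j => ?_)
    (((hasPowerDecay_Gamma_div_Gamma b d).summable (by linarith)).mul_left _)
  have := Gamma_pos_of_pos (show 0 < b + j by positivity)
  have := Gamma_pos_of_pos (show 0 < d + j by linarith [j.cast_nonneg (α := ℝ)])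
  rw [hyperTerm, mul_div_mul_comm]
  have hle := Gamma_div_Gamma_antitone ha hac (Nat.zero_le j)
  simp only [Nat.cast_zero, add_zero] at hle
  exact mul_le_mul_of_nonneg_right hle (by positivity)

theorem bilateralTerm_natCast {a b : ℝ} (c d : ℝ) (ha : ∀ m : ℕ, a ≠ -m) (hb : ∀ m : ℕ, b ≠ -m)
    (j : ℕ) : bilateralTerm a b c d j =
      sin (π * a) * sin (π * b) / π ^ 2 * hyperTerm a b c d j := by
  rw [bilateralTerm, Int.cast_natCast, inv_Gamma_one_sub_sub_natCast ha,
    inv_Gamma_one_sub_sub_natCast hb, hyperTerm]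
  rcases neg_one_pow_eq_or ℝ j with h | h <;> rw [h] <;> ring

theorem tsum_natCast_add_tsum_neg_add_one {f : ℤ → ℝ} {s : ℝ} (h : HasSum f s) :
    ∑' j : ℕ, f j + ∑' j : ℕ, f (-(j + 1)) = s := by
  rw [← h.tsum_eq]
  exact (tsum_of_nat_of_neg_add_one (h.summable.comp_injective Nat.cast_injective)
    (h.summable.comp_injective fun m n hmn => by simpa using hmn)).symm

theorem sin_mul_tsum_hyperTerm_add {a b c d : ℝ} (hac : a + 1 < c) (hbd : b < d)
    (ha : ∀ m : ℕ, a ≠ -m) (hb : ∀ m : ℕ, b ≠ -m) (hc : ∀ m : ℕ, c ≠ m + 2)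
    (hd : ∀ m : ℕ, d ≠ m + 2) :
    sin (π * a) * sin (π * b) * ∑' j, hyperTerm a b c d j +
        sin (π * c) * sin (π * d) * ∑' j, hyperTerm (2 - c) (2 - d) (2 - a) (2 - b) j =
      π ^ 2 * Γ (c + d - a - b - 1) / (Γ (c - a) * Γ (c - b) * Γ (d - a) * Γ (d - b)) := by
  have h := hasSum_bilateralTerm hac hbd
  have hright := bilateralTerm_natCast c d ha hb
  have hleft (j : ℕ) : bilateralTerm a b c d (-(j + 1)) =
      sin (π * c) * sin (π * d) / π ^ 2 * hyperTerm (2 - c) (2 - d) (2 - a) (2 - b) j := by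
    have hsin (z : ℝ) : sin (π * (2 - z)) = -sin (π * z) := by
      rw [mul_sub, mul_comm π 2, sin_two_pi_sub]
    rw [bilateralTerm_neg_add_one, bilateralTerm_natCast _ _
      (fun m h => hc m (by linear_combination -h)) (fun m h => hd m (by linear_combination -h)),
      hsin, hsin, neg_mul_neg]
  have hsum := tsum_natCast_add_tsum_neg_add_one h
  simp_rw [hright, hleft, tsum_mul_left] at hsum
  rw [mul_div_assoc, ← hsum]
  field_simp

theorem tsum_hyperTerm_one {a b c : ℝ} (hac : a + 1 < c) (hb : b < 1) (ha₀ : sin (π * a) ≠ 0)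
    (hb₀ : sin (π * b) ≠ 0) :
    ∑' j, hyperTerm a b c 1 j = Γ a * Γ b * Γ (c - a - b) / (Γ (c - a) * Γ (c - b)) := by
  have h := hasSum_bilateralTerm hac hb
  have hnot {z : ℝ} (hz : sin (π * z) ≠ 0) (m : ℕ) : z ≠ -m := by
    rintro rfl
    exact hz (by rw [mul_neg, sin_neg, mul_comm, sin_nat_mul_pi, neg_zero])
  have hright := bilateralTerm_natCast c 1 (hnot ha₀) (hnot hb₀)
  have hleft (j : ℕ) : bilateralTerm a b c 1 (-(j + 1)) = 0 := by
    simp [bilateralTerm, Gamma_neg_nat_eq_zero]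
  have hsum := tsum_natCast_add_tsum_neg_add_one h
  simp_rw [hright, hleft, tsum_mul_left, tsum_zero, add_zero] at hsum
  have hΓa := inv_Gamma_one_sub (hnot ha₀)
  have hΓb := inv_Gamma_one_sub (hnot hb₀)
  have hval : Γ (c + 1 - a - b - 1) / (Γ (c - a) * Γ (c - b) * Γ (1 - a) * Γ (1 - b)) =
      sin (π * a) * sin (π * b) / π ^ 2 *
        (Γ a * Γ b * Γ (c - a - b) / (Γ (c - a) * Γ (c - b))) := by
    rw [show c + 1 - a - b - 1 = c - a - b by ring]
    calc _ = Γ (c - a - b) / (Γ (c - a) * Γ (c - b)) * ((Γ (1 - a))⁻¹ * (Γ (1 - b))⁻¹) := by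
          field_simp
      _ = _ := by
        rw [hΓa, hΓb]
        field_simp
  exact mul_left_cancel₀ (by positivity) (hsum.trans hval)

section Contiguity

variable {a b c d z : ℝ} {j : ℕ}

theorem hyperTerm_a_add_one (h : z = a + 1) (ha : a + j ≠ 0) :
    hyperTerm z b c d j = (a + j) * hyperTerm a b c d j := by
  rw [hyperTerm, hyperTerm, Gamma_eq_mul_Gamma (by linear_combination h) ha]
  ring

theorem hyperTerm_b_add_one (h : z = b + 1) (hb : b + j ≠ 0) :
    hyperTerm a z c d j = (b + j) * hyperTerm a b c d j := by
  rw [hyperTerm, hyperTerm, Gamma_eq_mul_Gamma (b := z + j) (by linear_combination h) hb]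
  ring

theorem hyperTerm_c_add_one (h : z = c + 1) (hc : c + j ≠ 0) :
    hyperTerm a b z d j = hyperTerm a b c d j / (c + j) := by
  rw [hyperTerm, hyperTerm, Gamma_eq_mul_Gamma (b := z + j) (by linear_combination h) hc]
  field_simp

theorem hyperTerm_d_add_one (h : z = d + 1) (hd : d + j ≠ 0) :
    hyperTerm a b c z j = hyperTerm a b c d j / (d + j) := by
  rw [hyperTerm, hyperTerm, Gamma_eq_mul_Gamma (b := z + j) (by linear_combination h) hd]
  field_simp

theorem hyperTerm_succ (ha : a + j ≠ 0) (hb : b + j ≠ 0) (hc : c + j ≠ 0) (hd : d + j ≠ 0) :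
    hyperTerm a b c d (j + 1) =
      (a + j) * (b + j) / ((c + j) * (d + j)) * hyperTerm a b c d j := by
  have hshift : hyperTerm a b c d (j + 1) = hyperTerm (a + 1) (b + 1) (c + 1) (d + 1) j := by
    simp only [hyperTerm, Nat.cast_succ]
    ring_nf
  rw [hshift, hyperTerm_a_add_one rfl ha, hyperTerm_b_add_one rfl hb, hyperTerm_c_add_one rfl hc,
    hyperTerm_d_add_one rfl hd]
  field_simp

end Contiguity

/-! ### The series on the left -/

theorem tendsto_sum_range_of_wz {F H : ℕ → ℕ → ℝ} {L : ℝ}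
    (hrel : ∀ k j, F k j - F k (j + 1) = H k j - H (k + 1) j)
    (hF : ∀ k, Tendsto (F k) atTop (𝓝 0)) (hH : ∀ k, Summable (H k))
    (hlim : Tendsto (fun K => ∑' j, H K j) atTop (𝓝 L)) :
    Tendsto (fun K => ∑ k ∈ Finset.range K, F k 0) atTop (𝓝 (∑' j, H 0 j - L)) := by
  have hstep (k : ℕ) : F k 0 = ∑' j, H k j - ∑' j, H (k + 1) j := by
    have hsum : Summable fun j => F k j - F k (j + 1) := by
      simpa only [hrel] using (hH k).sub (hH (k + 1))
    rw [← tsum_sub_succ_eq hsum (hF k), ← (hH k).tsum_sub (hH (k + 1))]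
    simp only [hrel]
  simp_rw [hstep, Finset.sum_range_sub']
  exact tendsto_const_nhds.sub hlim

/-- The summand of the series on the left, without its sign and its linear factor. -/
noncomputable def baseTerm (t : ℝ) : ℝ :=
  2 ^ (-2 * t) * (pochG (1 / 2) t * pochG (1 / 4) t * pochG (3 / 4) t / pochG 1 t ^ 3)

theorem hasPowerDecay_pow {r : ℝ} (hr : |r| < 1) : HasPowerDecay (fun n => r ^ n) 1 0 := by
  simpa [HasPowerDecay, mul_comm] using tendsto_pow_const_mul_const_pow_of_abs_lt_one 1 hr

theorem summable_baseTerm (x : ℝ) :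
    Summable fun n : ℕ => (-1 : ℝ) ^ n * (baseTerm (n + x) * (20 * (n + x) + 3)) := by
  have hratio (a : ℝ) := hasPowerDecay_Gamma_div_Gamma (a + x) (1 + x)
  have h := (hasPowerDecay_pow (r := -1 / 4) (by norm_num [abs_lt])).mul
    ((((hratio (1 / 2)).mul (hratio (1 / 4))).mul (hratio (3 / 4))).mul
      (hasPowerDecay_const_add_natCast (x + 3 / 20)))
  refine ((h.summable (by linarith)).mul_left
    (20 * 2 ^ (-2 * x) / (Γ (1 / 2) * Γ (1 / 4) * Γ (3 / 4)))).congr fun n => ?_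
  have hpow : (2 : ℝ) ^ (-2 * (n + x)) = 2 ^ (-2 * x) * (1 / 4) ^ n := by
    rw [mul_add, add_comm, rpow_add two_pos, rpow_mul_natCast two_pos.le]
    norm_num [rpow_neg]
  have hsign : (-1 / 4 : ℝ) ^ n = (-1) ^ n * (1 / 4) ^ n := by
    rw [← mul_pow]
    norm_num
  simp only [baseTerm, pochG, hpow, hsign, Gamma_one, add_right_comm _ x, ← add_assoc]
  ring

theorem Gamma_one_quarter_mul_Gamma_three_quarters : Γ (1 / 4) * Γ (3 / 4) = √2 * π := by
  have h := Gamma_mul_Gamma_add_half (1 / 4)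
  norm_num [Gamma_one_half_eq, ← sqrt_eq_rpow] at h
  rw [h]
  linear_combination √2 * mul_self_sqrt pi_pos.le

/-- The weight of the companion sums `∑ⱼ wzTerm n j` in the telescoping of the series on the
left. -/
noncomputable def wzWeight (n : ℝ) : ℝ :=
  8 * √2 / (π ^ 2 * √π) * (Γ (n + 1 / 4) * Γ (n + 1 / 2) * Γ (n + 3 / 4) / Γ n)

/-- The summand of the companion sum of the series on the left. -/
noncomputable def wzTerm (n : ℝ) : ℕ → ℝ :=
  hyperTerm (n + 1 / 2) (1 / 2) (n + 1) (2 * n + 1)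

/-- The Wilf–Zeilberger mate of `wzTerm`. -/
noncomputable def wzCert (n : ℝ) (j : ℕ) : ℝ :=
  hyperTerm (n + 1 / 2) (1 / 2) (n + 1) (2 * n + 2) j *
    (((20 * n + 3) * (2 * n + 1) + 2 * (16 * n + 5) * j + 8 * j ^ 2) / (16 * n))

theorem wzWeight_add_one {n : ℝ} (h : -(1 / 4) < n) (h₀ : n ≠ 0) :
    wzWeight (n + 1) = wzWeight n * ((n + 1 / 4) * (n + 1 / 2) * (n + 3 / 4) / n) := by
  rw [wzWeight, wzWeight, Gamma_add_one h₀,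
    Gamma_eq_mul_Gamma (add_right_comm n 1 (1 / 4)) (by linarith),
    Gamma_eq_mul_Gamma (add_right_comm n 1 (1 / 2)) (by linarith),
    Gamma_eq_mul_Gamma (add_right_comm n 1 (3 / 4)) (by linarith)]
  ring

theorem wzWeight_pos {n : ℝ} (hn : 0 < n) : 0 < wzWeight n := by
  have := Gamma_pos_of_pos (show 0 < n + 1 / 4 by positivity)
  have := Gamma_pos_of_pos (show 0 < n + 1 / 2 by positivity)
  have := Gamma_pos_of_pos (show 0 < n + 3 / 4 by positivity)
  have := Gamma_pos_of_pos hn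
  rw [wzWeight]
  positivity

theorem wzTerm_nonneg {n : ℝ} (hn : 0 < n) (j : ℕ) : 0 ≤ wzTerm n j :=
  hyperTerm_nonneg (by positivity) (by positivity) (by positivity) (by positivity) j

theorem summable_wzTerm {n : ℝ} (hn : 0 < n) : Summable (wzTerm n) :=
  summable_hyperTerm (by linarith)

theorem wzTerm_zero {n : ℝ} (hn : -(1 / 2) < n) :
    wzTerm n 0 = π * 2 ^ (-2 * n) / Γ (n + 1) ^ 2 := by
  have hdup := Gamma_mul_Gamma_add_half (n + 1 / 2)
  rw [show n + 1 / 2 + 1 / 2 = n + 1 by ring, show 2 * (n + 1 / 2) = 2 * n + 1 by ring,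
    show 1 - (2 * n + 1) = -2 * n by ring] at hdup
  have h₁ := (Gamma_pos_of_pos (show 0 < n + 1 by linarith)).ne'
  have h₂ := (Gamma_pos_of_pos (show 0 < 2 * n + 1 by linarith)).ne'
  simp only [wzTerm, hyperTerm, Nat.cast_zero, add_zero, Gamma_one_half_eq]
  rw [div_eq_div_iff (by positivity) (by positivity)]
  linear_combination √π * Γ (n + 1) * hdup +
    Γ (n + 1) * Γ (2 * n + 1) * 2 ^ (-2 * n) * mul_self_sqrt pi_pos.le

theorem wzCert_sub_wzCert_succ {n : ℝ} (hn : 0 < n) (j : ℕ) :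
    wzCert n j - wzCert n (j + 1) =
      wzTerm n j + (n + 1 / 4) * (n + 1 / 2) * (n + 3 / 4) / n * wzTerm (n + 1) j := by
  have hraise : wzTerm (n + 1) j = (n + 1 / 2 + j) / ((n + 1 + j) * (2 * n + 2 + j)) *
      (wzTerm n j / (2 * n + 1 + j)) := by
    rw [wzTerm, hyperTerm_a_add_one (add_right_comm n 1 (1 / 2)) (by positivity),
      hyperTerm_c_add_one rfl (by positivity),
      hyperTerm_d_add_one (d := 2 * n + 2) (by ring) (by positivity),
      hyperTerm_d_add_one (d := 2 * n + 1) (by ring) (by positivity), wzTerm]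
    field_simp
  have hcert : hyperTerm (n + 1 / 2) (1 / 2) (n + 1) (2 * n + 2) j =
      wzTerm n j / (2 * n + 1 + j) :=
    hyperTerm_d_add_one (by ring) (by positivity)
  rw [hraise, wzCert, wzCert, hyperTerm_succ (by positivity) (by positivity) (by positivity)
    (by positivity), hcert]
  push_cast
  field_simp
  ring

theorem tendsto_wzCert {n : ℝ} (hn : 0 < n) : Tendsto (wzCert n) atTop (𝓝 0) := by
  have h := hasPowerDecay_hyperTerm (n + 1 / 2) (1 / 2) (n + 1) (2 * n + 2)
  have h₀ := (h.tendsto_zero (by linarith)).mul_const ((20 * n + 3) * (2 * n + 1) / (16 * n))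
  have h₁ := (h.mul_natCast.tendsto_zero (by linarith)).mul_const (2 * (16 * n + 5) / (16 * n))
  have h₂ := (h.mul_natCast.mul_natCast.tendsto_zero (by linarith)).mul_const (8 / (16 * n))
  have := (h₀.add h₁).add h₂
  simp only [zero_mul, add_zero] at this
  refine this.congr fun j => ?_
  rw [wzCert]
  ring

theorem baseTerm_eq {x : ℝ} (hx : -1 < x) (hx₀ : x ≠ 0) :
    baseTerm x = wzWeight x * (π * 2 ^ (-2 * x) / Γ (x + 1) ^ 2) / (16 * x) := by
  have hΓ := (Gamma_pos_of_pos (show 0 < x + 1 by linarith)).ne'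
  have hΓx := Gamma_add_one hx₀
  have hΓ₀ : Γ x ≠ 0 := right_ne_zero_of_mul (hΓx ▸ hΓ)
  have h₂ : √2 * √2 = 2 := mul_self_sqrt zero_le_two
  rw [baseTerm, wzWeight, pochG, pochG, pochG, pochG, Gamma_one, Gamma_one_half_eq, add_comm 1,
    add_comm (1 / 2), add_comm (1 / 4), add_comm (3 / 4), hΓx]
  generalize Γ (x + 1 / 2) = A, Γ (x + 1 / 4) = B, Γ (x + 3 / 4) = C
  calc _ = 2 ^ (-2 * x) * (A * B * C) / (√π * (Γ (1 / 4) * Γ (3 / 4)) * (x * Γ x) ^ 3) := by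
        field_simp
    _ = _ := by
        rw [Gamma_one_quarter_mul_Gamma_three_quarters]
        field_simp
        linear_combination -8 * A * B * C * h₂

theorem wzWeight_mul_wzCert_zero {n : ℝ} (hn : 0 < n) :
    wzWeight n * wzCert n 0 = baseTerm n * (20 * n + 3) := by
  have hcert : hyperTerm (n + 1 / 2) (1 / 2) (n + 1) (2 * n + 2) 0 = wzTerm n 0 / (2 * n + 1) := by
    rw [hyperTerm_d_add_one (d := 2 * n + 1) (by ring) (by positivity), Nat.cast_zero, add_zero,
      wzTerm]
  rw [wzCert, hcert, wzTerm_zero (by linarith), baseTerm_eq (by linarith) hn.ne']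
  rw [Nat.cast_zero]
  field_simp
  ring

theorem wzWeight_mul_tsum_wzTerm_le {n : ℝ} (hn : 1 / 2 < n) :
    wzWeight n * ∑' j, wzTerm n j ≤ 4 * √2 / (π * √π) *
      (Γ (n + 1 / 4) / Γ n * (Γ (n + 1 / 2) / Γ (n + 1)) * (Γ (n - 1 / 4) / Γ n)) := by
  have hdup := Gamma_mul_Gamma_add_half n
  have hΓ (z : ℝ) (hz : 0 < z) : 0 < Γ (n + z) := Gamma_pos_of_pos (by linarith)
  have := Gamma_pos_of_pos (show 0 < n by linarith)
  have := hΓ (1 / 4) (by norm_num)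
  have := hΓ (1 / 2) (by norm_num)
  have := hΓ 1 (by norm_num)
  have := Gamma_pos_of_pos (show 0 < n - 1 / 4 by linarith)
  have := Gamma_pos_of_pos (show 0 < 2 * n by linarith)
  have h34 : Γ (n + 3 / 4) = (n - 1 / 4) * Γ (n - 1 / 4) :=
    Gamma_eq_mul_Gamma (by ring) (by linarith)
  have hpow : (2 : ℝ) ^ (1 - 2 * n) ≤ 1 :=
    rpow_le_one_of_one_le_of_nonpos one_le_two (by linarith)
  have hd : 0 < n - 1 / 4 := by linarith
  have hle := tsum_hyperTerm_le (a := n + 1 / 2) (b := 1 / 2) (c := n + 1) (d := 2 * n + 1)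
    (by linarith) (by linarith) (by norm_num) (by linarith)
  calc _ ≤ wzWeight n * _ := mul_le_mul_of_nonneg_left hle (wzWeight_pos (by linarith)).le
    _ = 2 ^ (1 - 2 * n) * (4 * √2 / (π * √π) *
      (Γ (n + 1 / 4) / Γ n * (Γ (n + 1 / 2) / Γ (n + 1)) * (Γ (n - 1 / 4) / Γ n))) := by
        rw [wzWeight, h34, Gamma_one_half_eq, add_sub_cancel_right,
          show 2 * n + 1 - 1 / 2 - 1 = 2 * (n - 1 / 4) by ring]
        generalize Γ (n + 1 / 2) = A, Γ (n + 1 / 4) = B, n - 1 / 4 = D,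
          (2 : ℝ) ^ (1 - 2 * n) = p, Γ (2 * n) = G at *
        field_simp
        linear_combination 8 * √π * hdup + 8 * G * p * mul_self_sqrt pi_pos.le
    _ ≤ _ := mul_le_of_le_one_left (by positivity) hpow

theorem tendsto_wzWeight_mul_tsum_wzTerm {y : ℝ} (hy : 1 / 2 < y) :
    Tendsto (fun m : ℕ => wzWeight (y + m) * ∑' j, wzTerm (y + m) j) atTop (𝓝 0) := by
  have h := ((hasPowerDecay_Gamma_div_Gamma (y + 1 / 4) y).mul
    (hasPowerDecay_Gamma_div_Gamma (y + 1 / 2) (y + 1))).mul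
    (hasPowerDecay_Gamma_div_Gamma (y - 1 / 4) y)
  refine squeeze_zero (fun m => ?_) (fun m => ?_)
    ((h.const_mul (4 * √2 / (π * √π))).tendsto_zero (by linarith))
  · have : 0 < y + m := by positivity
    exact mul_nonneg (wzWeight_pos this).le (tsum_nonneg (wzTerm_nonneg this))
  · refine (wzWeight_mul_tsum_wzTerm_le (by linarith [m.cast_nonneg (α := ℝ)])).trans_eq ?_
    simp only [add_right_comm y _ (m : ℝ), sub_eq_add_neg]

theorem tendsto_neg_one_pow_mul {u : ℕ → ℝ} (hu : Tendsto u atTop (𝓝 0)) :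
    Tendsto (fun m => (-1) ^ m * u m) atTop (𝓝 0) :=
  tendsto_zero_iff_norm_tendsto_zero.2 (by simpa using hu.norm)

theorem tsum_baseTerm_eq {y : ℝ} (hy : 1 / 2 < y) :
    ∑' m : ℕ, (-1 : ℝ) ^ m * (baseTerm (m + y) * (20 * (m + y) + 3)) =
      wzWeight y * ∑' j, wzTerm y j := by
  have hpos (m : ℕ) : 0 < y + m := by positivity
  have h := tendsto_sum_range_of_wz (L := 0)
    (F := fun m j => (-1) ^ m * (wzWeight (y + m) * wzCert (y + m) j))
    (H := fun m j => (-1) ^ m * (wzWeight (y + m) * wzTerm (y + m) j)) ?_ ?_ ?_ ?_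
  · simp only [Nat.cast_zero, pow_zero, one_mul, add_zero, sub_zero, tsum_mul_left,
      wzWeight_mul_wzCert_zero (hpos _)] at h
    simp only [add_comm y] at h
    exact tendsto_nhds_unique (summable_baseTerm y).hasSum.tendsto_sum_nat h
  · intro m j
    have hrel := wzCert_sub_wzCert_succ (hpos m) j
    rw [Nat.cast_succ, ← add_assoc, wzWeight_add_one (by linarith [hpos m]) (hpos m).ne',
      pow_succ]
    linear_combination (-1) ^ m * wzWeight (y + m) * hrel
  · intro m
    simpa using ((tendsto_wzCert (hpos m)).const_mul _).const_mul ((-1 : ℝ) ^ m)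
  · exact fun m => ((summable_wzTerm (hpos m)).mul_left _).mul_left _
  · simp only [tsum_mul_left]
    exact tendsto_neg_one_pow_mul (tendsto_wzWeight_mul_tsum_wzTerm hy)

/-! ### Weighted sums of equivalent sequences -/

theorem abs_tsum_mul_le {w u v : ℕ → ℝ} {c : ℝ} {R : ℕ} (hw : ∀ r, 0 ≤ w r) (hv : ∀ r, 0 ≤ v r)
    (hsum : Summable fun r => w r * v r) (hc : 0 ≤ c) (huv : ∀ r ≥ R, |u r| ≤ c * v r) :
    |∑' r, w r * u r| ≤ ∑ r ∈ Finset.range R, w r * |u r| + c * ∑' r, w r * v r := by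
  have hle (r : ℕ) (hr : R ≤ r) : ‖w r * u r‖ ≤ c * (w r * v r) := by
    rw [norm_mul, norm_of_nonneg (hw r), mul_left_comm]
    exact mul_le_mul_of_nonneg_left (huv r hr) (hw r)
  have hsum' : Summable fun r => w r * u r :=
    .of_norm_bounded_eventually_nat (hsum.mul_left c) (eventually_atTop.2 ⟨R, hle⟩)
  have htail : |∑' r, w (r + R) * u (r + R)| ≤ c * ∑' r, w r * v r := by
    rw [← tsum_mul_left, ← (hsum.mul_left c).sum_add_tsum_nat_add R]
    refine (tsum_of_norm_bounded ((summable_nat_add_iff R).2 (hsum.mul_left c)).hasSum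
      fun r => hle _ (Nat.le_add_left R r)).trans (le_add_of_nonneg_left ?_)
    exact Finset.sum_nonneg fun r _ => mul_nonneg hc (mul_nonneg (hw r) (hv r))
  rw [← hsum'.sum_add_tsum_nat_add R]
  refine (abs_add_le _ _).trans (add_le_add ((Finset.abs_sum_le_sum_abs _ _).trans_eq ?_) htail)
  simp only [abs_mul, abs_of_nonneg (hw _)]

section Toeplitz

variable {w : ℕ → ℕ → ℝ} {u v : ℕ → ℝ} {M : ℝ}

theorem tendsto_tsum_mul_zero_of_isLittleO (hw : ∀ᶠ N in atTop, ∀ r, 0 ≤ w N r)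
    (hw₀ : ∀ r, Tendsto (w · r) atTop (𝓝 0)) (hv : ∀ r, 0 ≤ v r)
    (hsum : ∀ᶠ N in atTop, Summable fun r => w N r * v r)
    (hM : ∀ᶠ N in atTop, ∑' r, w N r * v r ≤ M) (huv : u =o[atTop] v) :
    Tendsto (fun N => ∑' r, w N r * u r) atTop (𝓝 0) := by
  refine NormedAddGroup.tendsto_nhds_zero.2 fun ε hε => ?_
  obtain ⟨c, hc, hcM⟩ : ∃ c > 0, c * M < ε / 2 := by
    have hM' : 0 < |M| + 1 := by positivity
    refine ⟨ε / 2 / (|M| + 1), by positivity, ?_⟩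
    rw [div_mul_eq_mul_div, div_lt_iff₀ hM']
    exact mul_lt_mul_of_pos_left (by linarith [le_abs_self M]) (half_pos hε)
  obtain ⟨R, hR⟩ := eventually_atTop.1 (huv.bound hc)
  have hhead : Tendsto (fun N => ∑ r ∈ Finset.range R, w N r * |u r|) atTop (𝓝 0) := by
    simpa using tendsto_finsetSum (Finset.range R) fun r _ => (hw₀ r).mul_const |u r|
  filter_upwards [hw, hsum, hM, hhead.eventually_lt_const (half_pos hε)] with N hw hsum hM hhead
  have hbound := abs_tsum_mul_le hw hv hsum hc.le fun r hr => by
    simpa only [norm_eq_abs, abs_of_nonneg (hv r)] using hR r hr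
  have := mul_le_mul_of_nonneg_left hM hc.le
  rw [norm_eq_abs]
  linarith

theorem tendsto_tsum_mul_of_isEquivalent (hw : ∀ᶠ N in atTop, ∀ r, 0 ≤ w N r)
    (hw₀ : ∀ r, Tendsto (w · r) atTop (𝓝 0)) (hv : ∀ r, 0 ≤ v r)
    (hsum : ∀ᶠ N in atTop, Summable fun r => w N r * v r)
    (hM : Tendsto (fun N => ∑' r, w N r * v r) atTop (𝓝 M)) (huv : u ~[atTop] v) :
    Tendsto (fun N => ∑' r, w N r * u r) atTop (𝓝 M) := by
  have hzero := tendsto_tsum_mul_zero_of_isLittleO hw hw₀ hv hsum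
    (hM.eventually_le_const (lt_add_one M)) huv.isLittleO
  rw [← zero_add M]
  refine (hzero.add hM).congr' ?_
  filter_upwards [hsum] with N hsum
  have hdiff : Summable fun r => w N r * (u - v) r :=
    summable_of_isBigO_nat hsum ((isBigO_refl (w N) atTop).mul huv.isLittleO.isBigO)
  rw [← hdiff.tsum_add hsum]
  simp only [Pi.sub_apply, ← mul_add, sub_add_cancel]

end Toeplitz

theorem isEquivalent_Gamma_div_Gamma {a b c d : ℝ} (h : b - a = d - c) (hc : 0 < c) (hd : 0 < d) :
    (fun r : ℕ => Γ (a + r) / Γ (b + r)) ~[atTop] fun r : ℕ => Γ (c + r) / Γ (d + r) := by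
  have hpos (z : ℝ) (hz : 0 < z) (r : ℕ) : 0 < Γ (z + r) := Gamma_pos_of_pos (by positivity)
  refine (isEquivalent_iff_tendsto_one
    (.of_forall fun r => (div_pos (hpos c hc r) (hpos d hd r)).ne')).2 ?_
  have hquot := (hasPowerDecay_Gamma_div_Gamma a b).div (hasPowerDecay_Gamma_div_Gamma c d)
    one_ne_zero
  rw [h, sub_self, div_one] at hquot
  simpa only [HasPowerDecay, rpow_zero, mul_one, Pi.div_def] using hquot

/-! ### Transforming the companion sum -/

theorem hyperTerm_comm (a b c d : ℝ) : hyperTerm a b c d = hyperTerm b a c d := by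
  funext j
  rw [hyperTerm, hyperTerm, mul_comm (Γ (a + j))]

/-- The summand of the left half of Dougall's bilateral series whose right half is the companion
sum `∑ⱼ wzTerm y j`. -/
noncomputable def reflTerm (y : ℝ) : ℕ → ℝ :=
  hyperTerm (1 - y) (1 - 2 * y) (3 / 2) (3 / 2 - y)

theorem sin_pi_mul_ne_zero_of_ne_intCast {z : ℝ} (hz : ∀ m : ℤ, z ≠ m) : sin (π * z) ≠ 0 :=
  sin_ne_zero_iff.2 fun m h => hz m (mul_left_cancel₀ pi_ne_zero (by linear_combination -h))

theorem cos_pi_mul_ne_zero {y : ℝ} (hy : ∀ m : ℤ, 2 * y ≠ m) : cos (π * y) ≠ 0 := by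
  have h := sin_pi_mul_ne_zero_of_ne_intCast hy
  rw [mul_left_comm, sin_two_mul] at h
  exact right_ne_zero_of_mul h

theorem tsum_wzTerm_add_tsum_reflTerm {y : ℝ} (hy : 1 / 2 < y) (hint : ∀ m : ℤ, 2 * y ≠ m) :
    ∑' j, wzTerm y j + 2 * sin (π * y) ^ 2 * ∑' r, reflTerm y r =
      π * √π * Γ (2 * y) / (Γ (y + 1 / 2) ^ 2 * Γ (2 * y + 1 / 2) * cos (π * y)) := by
  have hcos := cos_pi_mul_ne_zero hint
  have h := sin_mul_tsum_hyperTerm_add (a := 1 / 2) (b := y + 1 / 2) (c := y + 1) (d := 2 * y + 1)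
    (by linarith) (by linarith) (fun m => by linarith [m.cast_nonneg (α := ℝ)])
    (fun m => by linarith [m.cast_nonneg (α := ℝ)])
    (fun m hm => hint (2 * (m + 1)) (by push_cast; linear_combination 2 * hm))
    (fun m hm => hint (m + 1) (by push_cast; linear_combination hm))
  rw [show 2 - (y + 1) = 1 - y by ring, show 2 - (2 * y + 1) = 1 - 2 * y by ring,
    show (2 : ℝ) - 1 / 2 = 3 / 2 by norm_num, show 2 - (y + 1 / 2) = 3 / 2 - y by ring,
    show y + 1 + (2 * y + 1) - 1 / 2 - (y + 1 / 2) - 1 = 2 * y by ring,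
    show y + 1 - 1 / 2 = y + 1 / 2 by ring, show y + 1 - (y + 1 / 2) = 1 / 2 by ring,
    show 2 * y + 1 - 1 / 2 = 2 * y + 1 / 2 by ring,
    show 2 * y + 1 - (y + 1 / 2) = y + 1 / 2 by ring, Gamma_one_half_eq,
    show π * (1 / 2) = π / 2 by ring, show π * (y + 1 / 2) = π * y + π / 2 by ring,
    show π * (y + 1) = π * y + π by ring, show π * (2 * y + 1) = 2 * (π * y) + π by ring,
    sin_pi_div_two, sin_add_pi_div_two, sin_add_pi, sin_add_pi, sin_two_mul, hyperTerm_comm] at h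
  have hsum : cos (π * y) * (∑' j, wzTerm y j + 2 * sin (π * y) ^ 2 * ∑' r, reflTerm y r) =
      π ^ 2 * Γ (2 * y) / (Γ (y + 1 / 2) * √π * Γ (2 * y + 1 / 2) * Γ (y + 1 / 2)) := by
    rw [← h, wzTerm, reflTerm]
    ring
  have := Gamma_pos_of_pos (show 0 < y + 1 / 2 by linarith)
  have := Gamma_pos_of_pos (show 0 < 2 * y + 1 / 2 by linarith)
  refine mul_left_cancel₀ hcos (hsum.trans ?_)
  generalize Γ (y + 1 / 2) = A, Γ (2 * y + 1 / 2) = B at *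
  field_simp
  rw [sq_sqrt pi_pos.le]

/-- The summand of the series into which `∑ᵣ reflTerm y r` is transformed. -/
noncomputable def altTerm (y : ℝ) : ℕ → ℝ :=
  hyperTerm (y + 1 / 2) (1 - 2 * y) (3 / 2 - y) (3 / 2)

/-- One half of the Wilf–Zeilberger pair exchanging `altTerm` and `reflTerm`; it restricts to
`altTerm` at `r = 0`. -/
noncomputable def swapF (y : ℝ) (s : ℕ) : ℕ → ℝ := fun r =>
  Γ (y + 1 / 2 + s) / Γ (3 / 2 - y + s) *
    hyperTerm (1 - y) (1 - 2 * y + s) (3 / 2 + s) (1 / 2 - y) r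

/-- The other half of the Wilf–Zeilberger pair exchanging `altTerm` and `reflTerm`; it restricts
to `reflTerm` at `s = 0`. -/
noncomputable def swapH (y : ℝ) (s : ℕ) : ℕ → ℝ := fun r =>
  -(Γ (y + 1 / 2 + s) / Γ (1 / 2 - y + s) *
    hyperTerm (1 - y) (1 - 2 * y + s) (3 / 2 + s) (3 / 2 - y) r)

theorem swapF_sub_swapF_succ {y : ℝ} (hy : 1 / 2 < y) (hint : ∀ m : ℤ, 2 * y ≠ m) (s r : ℕ) :
    swapF y s r - swapF y s (r + 1) = swapH y s r - swapH y (s + 1) r := by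
  have h₁ : 1 - 2 * y + s + r ≠ 0 := fun h => hint (1 + s + r) (by push_cast; linear_combination -h)
  have h₂ : 1 - y + r ≠ 0 := fun h => hint (2 * (1 + r)) (by push_cast; linear_combination -2 * h)
  have h₃ : 1 / 2 - y + r ≠ 0 := fun h => hint (1 + 2 * r) (by push_cast; linear_combination -2 * h)
  have h₄ : 1 / 2 - y + s ≠ 0 := fun h => hint (1 + 2 * s) (by push_cast; linear_combination -2 * h)
  have h₅ : 3 / 2 + (s : ℝ) + r ≠ 0 := by positivity
  simp only [swapF, swapH]
  rw [hyperTerm_succ h₂ h₁ h₅ h₃,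
    hyperTerm_b_add_one (z := 1 - 2 * y + (s + 1 : ℕ)) (b := 1 - 2 * y + s) (by push_cast; ring) h₁,
    hyperTerm_c_add_one (z := 3 / 2 + (s + 1 : ℕ)) (c := 3 / 2 + s) (by push_cast; ring) h₅,
    hyperTerm_d_add_one (z := 3 / 2 - y) (d := 1 / 2 - y) (by ring) h₃,
    Gamma_eq_mul_Gamma (b := 3 / 2 - y + s) (by ring) h₄,
    Gamma_eq_mul_Gamma (b := 1 / 2 - y + (s + 1 : ℕ)) (by push_cast; ring) h₄,
    Gamma_eq_mul_Gamma (b := y + 1 / 2 + (s + 1 : ℕ)) (a := y + 1 / 2 + s) (by push_cast; ring)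
      (by positivity)]
  generalize hyperTerm (1 - y) (1 - 2 * y + s) (3 / 2 + s) (1 / 2 - y) r = K,
    Γ (y + 1 / 2 + s) = A, Γ (1 / 2 - y + s) = B
  rw [show 1 - 2 * y + s + r = 1 / 2 - y + r + (1 / 2 - y + s) by ring,
    show y + 1 / 2 + s = 3 / 2 + s + r - (1 - y + r) by ring]
  generalize 1 / 2 - y + (r : ℝ) = p, 1 / 2 - y + (s : ℝ) = q, 3 / 2 + (s : ℝ) + r = t at *
  field_simp
  ring

theorem tendsto_swapF {y : ℝ} (hy : 0 < y) (s : ℕ) : Tendsto (swapF y s) atTop (𝓝 0) := by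
  have h := (hasPowerDecay_hyperTerm (1 - y) (1 - 2 * y + s) (3 / 2 + s) (1 / 2 - y)).tendsto_zero
    (by linarith)
  rw [← mul_zero]
  exact h.const_mul (Γ (y + 1 / 2 + s) / Γ (3 / 2 - y + s))

theorem summable_swapH {y : ℝ} (hy : 0 < y) (s : ℕ) : Summable (swapH y s) :=
  ((summable_hyperTerm (by linarith)).mul_left _).neg

/-- The factor of `swapH y N r` that depends on `N`. -/
noncomputable def swapWeight (y : ℝ) (N r : ℕ) : ℝ :=
  Γ (y + 1 / 2 + N) / Γ (1 / 2 - y + N) * (Γ (1 - 2 * y + N + r) / Γ (3 / 2 + N + r))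

theorem swapH_eq (y : ℝ) (N r : ℕ) :
    swapH y N r = -(swapWeight y N r * (Γ (1 - y + r) / Γ (3 / 2 - y + r))) := by
  rw [swapH, swapWeight, hyperTerm]
  ring

theorem swapWeight_mul_eq (y : ℝ) (N r : ℕ) :
    swapWeight y N r * (Γ (1 / 2 + r) / Γ (1 + r)) =
      Γ (y + 1 / 2 + N) / Γ (1 / 2 - y + N) *
        hyperTerm (1 - 2 * y + N) (1 / 2) (3 / 2 + N) 1 r := by
  rw [swapWeight, hyperTerm]
  ring

theorem swapWeight_nonneg {y : ℝ} {N : ℕ} (hy : 1 / 2 < y) (hN : 2 * y ≤ N) (r : ℕ) :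
    0 ≤ swapWeight y N r := by
  have := Gamma_pos_of_pos (show 0 < y + 1 / 2 + N by positivity)
  have := Gamma_pos_of_pos (show 0 < 1 / 2 - y + N by linarith)
  have := Gamma_pos_of_pos (show 0 < 1 - 2 * y + N + r by linarith [r.cast_nonneg (α := ℝ)])
  have := Gamma_pos_of_pos (show 0 < 3 / 2 + (N : ℝ) + r by positivity)
  rw [swapWeight]
  positivity

theorem tendsto_swapWeight (y : ℝ) (r : ℕ) : Tendsto (swapWeight y · r) atTop (𝓝 0) := by
  have h := (hasPowerDecay_Gamma_div_Gamma (y + 1 / 2) (1 / 2 - y)).mul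
    (hasPowerDecay_Gamma_div_Gamma (1 - 2 * y + r) (3 / 2 + r))
  refine (h.tendsto_zero (by linarith)).congr fun N => ?_
  rw [swapWeight, add_right_comm (1 - 2 * y), add_right_comm (3 / 2 : ℝ)]

theorem tendsto_tsum_swapWeight_mul {y : ℝ} (hy : 1 / 2 < y) (hint : ∀ m : ℤ, 2 * y ≠ m) :
    Tendsto (fun N => ∑' r : ℕ, swapWeight y N r * (Γ (1 / 2 + r) / Γ (1 + r))) atTop
      (𝓝 (√π * Γ (2 * y) / Γ (2 * y + 1 / 2))) := by
  have hsin (N : ℕ) : sin (π * (1 - 2 * y + N)) ≠ 0 :=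
    sin_pi_mul_ne_zero_of_ne_intCast fun m h =>
      hint (1 + N - m) (by push_cast; linear_combination -h)
  have hgauss (N : ℕ) := tsum_hyperTerm_one (a := 1 - 2 * y + N) (b := 1 / 2) (c := 3 / 2 + N)
    (by linarith) (by norm_num) (hsin N) (by rw [mul_one_div, sin_pi_div_two]; exact one_ne_zero)
  have h := (hasPowerDecay_Gamma_div_Gamma (y + 1 / 2) (1 / 2 - y)).mul
    (hasPowerDecay_Gamma_div_Gamma (1 - 2 * y) 1)
  have h' := h.const_mul (√π * Γ (2 * y) / Γ (2 * y + 1 / 2))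
  rw [show 1 / 2 - y - (y + 1 / 2) + (1 - (1 - 2 * y)) = 0 by ring] at h'
  simp only [HasPowerDecay, rpow_zero, mul_one] at h'
  refine h'.congr fun N => ?_
  simp only [swapWeight_mul_eq, tsum_mul_left, hgauss]
  rw [show 3 / 2 + (N : ℝ) - (1 - 2 * y + N) - 1 / 2 = 2 * y by ring,
    show 3 / 2 + (N : ℝ) - (1 - 2 * y + N) = 2 * y + 1 / 2 by ring,
    show 3 / 2 + (N : ℝ) - 1 / 2 = 1 + N by ring, Gamma_one_half_eq]
  ring

theorem tendsto_tsum_swapH {y : ℝ} (hy : 1 / 2 < y) (hint : ∀ m : ℤ, 2 * y ≠ m) :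
    Tendsto (fun N => ∑' r, swapH y N r) atTop (𝓝 (-(√π * Γ (2 * y) / Γ (2 * y + 1 / 2)))) := by
  simp only [swapH_eq, tsum_neg]
  refine (tendsto_tsum_mul_of_isEquivalent ?_ (tendsto_swapWeight y) ?_ (.of_forall fun N => ?_)
    (tendsto_tsum_swapWeight_mul hy hint)
    (isEquivalent_Gamma_div_Gamma (by ring) one_half_pos one_pos)).neg
  · filter_upwards [tendsto_natCast_atTop_atTop.eventually_ge_atTop (2 * y)] with N hN
    exact swapWeight_nonneg hy hN
  · exact fun r => (div_pos (Gamma_pos_of_pos (by positivity))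
      (Gamma_pos_of_pos (by positivity))).le
  · simp only [swapWeight_mul_eq]
    exact (summable_hyperTerm (by linarith)).mul_left _

theorem swapF_zero (y : ℝ) (s : ℕ) : swapF y s 0 = Γ (1 - y) / Γ (1 / 2 - y) * altTerm y s := by
  simp only [swapF, altTerm, hyperTerm, Nat.cast_zero, add_zero]
  ring

theorem swapH_zero (y : ℝ) (r : ℕ) :
    swapH y 0 r = -(Γ (y + 1 / 2) / Γ (1 / 2 - y) * reflTerm y r) := by
  simp only [swapH, reflTerm, Nat.cast_zero, add_zero]

theorem summable_altTerm (y : ℝ) : Summable (altTerm y) := summable_hyperTerm (by linarith)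

theorem tsum_altTerm_add_tsum_reflTerm {y : ℝ} (hy : 1 / 2 < y) (hint : ∀ m : ℤ, 2 * y ≠ m) :
    Γ (1 - y) / Γ (y + 1 / 2) * ∑' s, altTerm y s + ∑' r, reflTerm y r =
      π * √π * Γ (2 * y) / (Γ (y + 1 / 2) ^ 2 * Γ (2 * y + 1 / 2) * cos (π * y)) := by
  have h := tendsto_sum_range_of_wz (swapF_sub_swapF_succ hy hint)
    (tendsto_swapF (by linarith)) (summable_swapH (by linarith)) (tendsto_tsum_swapH hy hint)
  simp only [swapF_zero, swapH_zero, tsum_neg, tsum_mul_left] at h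
  have hsum := tendsto_nhds_unique
    ((summable_altTerm y).mul_left (Γ (1 - y) / Γ (1 / 2 - y))).hasSum.tendsto_sum_nat h
  rw [tsum_mul_left] at hsum
  have hpos := Gamma_pos_of_pos (show 0 < y + 1 / 2 by linarith)
  have hinv := inv_Gamma_one_sub (z := y + 1 / 2) fun m => by linarith [m.cast_nonneg (α := ℝ)]
  rw [show 1 - (y + 1 / 2) = 1 / 2 - y by ring, show π * (y + 1 / 2) = π * y + π / 2 by ring,
    sin_add_pi_div_two] at hinv
  have hcos := cos_pi_mul_ne_zero hint
  rw [div_eq_mul_inv, div_eq_mul_inv _ (Γ (1 / 2 - y)), hinv] at hsum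
  refine mul_left_cancel₀ (mul_ne_zero hcos hpos.ne') ?_
  generalize Γ (y + 1 / 2) = A, Γ (2 * y + 1 / 2) = B, cos (π * y) = C at *
  field_simp at hsum ⊢
  linear_combination hsum

/-- The weight for which `altWeight y * ∑ₛ altTerm y s` differs from the series on the left by an
elementary function. -/
noncomputable def altWeight (y : ℝ) : ℝ :=
  2 * sin (π * y) ^ 2 * (Γ (1 - y) / Γ (y + 1 / 2)) * wzWeight y

theorem wzWeight_mul_Gamma_div {y : ℝ} (hy : 0 < y) (hcos : cos (π * y) ≠ 0) :
    wzWeight y * (π * √π * Γ (2 * y) / (Γ (y + 1 / 2) ^ 2 * Γ (2 * y + 1 / 2) * cos (π * y))) =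
      8 / (π * cos (π * y)) := by
  have hdup := Gamma_mul_Gamma_add_half y
  have hdup' := Gamma_mul_Gamma_add_half (y + 1 / 4)
  rw [show y + 1 / 4 + 1 / 2 = y + 3 / 4 by ring, show 2 * (y + 1 / 4) = 2 * y + 1 / 2 by ring,
    show 1 - (2 * y + 1 / 2) = 1 - 2 * y - 1 / 2 by ring, rpow_sub two_pos, ← sqrt_eq_rpow] at hdup'
  have := Gamma_pos_of_pos hy
  have := Gamma_pos_of_pos (show 0 < y + 1 / 2 by linarith)
  have := Gamma_pos_of_pos (show 0 < 2 * y + 1 / 2 by linarith)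
  have := Gamma_pos_of_pos (show 0 < 2 * y by linarith)
  rw [wzWeight]
  generalize Γ (y + 1 / 2) = A, Γ (y + 1 / 4) = B, Γ (y + 3 / 4) = C, Γ (2 * y + 1 / 2) = P at *
  calc _ = 8 * √2 / (π * cos (π * y)) * (Γ (2 * y) * (B * C)) / (P * (Γ y * A)) := by field_simp
    _ = _ := by
      rw [hdup, hdup']
      field_simp

theorem tsum_wzTerm_eq {y : ℝ} (hy : 1 / 2 < y) (hint : ∀ m : ℤ, 2 * y ≠ m) :
    wzWeight y * ∑' j, wzTerm y j =
      8 * cos (2 * π * y) / (π * cos (π * y)) + altWeight y * ∑' s, altTerm y s := by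
  have hrefl := tsum_wzTerm_add_tsum_reflTerm hy hint
  have halt := tsum_altTerm_add_tsum_reflTerm hy hint
  have hval := wzWeight_mul_Gamma_div (by linarith) (cos_pi_mul_ne_zero hint)
  have hcos : cos (2 * π * y) = 1 - 2 * sin (π * y) ^ 2 := by
    rw [mul_assoc, cos_two_mul']
    linear_combination sin_sq_add_cos_sq (π * y)
  rw [hcos, altWeight]
  linear_combination wzWeight y * hrefl - 2 * sin (π * y) ^ 2 * wzWeight y * halt +
    (1 - 2 * sin (π * y) ^ 2) * hval

/-! ### Continuation to small arguments -/

/-- The Wilf–Zeilberger mate of `altTerm` for the shift `x ↦ x + 1`. -/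
noncomputable def altCert (x : ℝ) : ℕ → ℝ := fun j =>
  hyperTerm (x + 1 / 2) (-1 - 2 * x) (1 / 2 - x) (1 / 2) j *
    ((20 * x + 3) * (1 + 2 * x) / (16 * x ^ 2) - (16 * x + 3) / (8 * x ^ 2) * j)

theorem altWeight_add_one {x : ℝ} (h : -(1 / 4) < x) (h₀ : x ≠ 0) :
    altWeight (x + 1) = -(altWeight x * ((x + 1 / 4) * (x + 3 / 4) / x ^ 2)) := by
  have hsin : sin (π * (x + 1)) = -sin (π * x) := by rw [mul_add, mul_one, sin_add_pi]
  have hx : x + 1 / 2 ≠ 0 := by linarith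
  rw [altWeight, altWeight, wzWeight_add_one h h₀, hsin, show 1 - (x + 1) = -x by ring,
    Gamma_eq_mul_Gamma (b := 1 - x) (a := -x) (by ring) (neg_ne_zero.2 h₀),
    Gamma_eq_mul_Gamma (add_right_comm x 1 (1 / 2)) hx]
  generalize x + 1 / 2 = p at *
  field_simp

theorem intCast_sub_two_mul_ne_zero {x : ℝ} (h : -(1 / 2) < x) (h₀ : x ≠ 0) (h' : x < 1 / 2)
    (m : ℤ) : m - 2 * x ≠ 0 := by
  intro hm
  have h₁ : (-1 : ℝ) < m := by linarith
  have h₂ : (m : ℝ) < 1 := by linarith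
  have : m = 0 := by
    norm_cast at h₁ h₂
    omega
  subst this
  exact h₀ (by simpa using hm)

theorem altCert_sub_altCert_succ {x : ℝ} (h : -(1 / 2) < x) (h₀ : x ≠ 0) (h' : x < 1 / 2) (j : ℕ) :
    altCert x j - altCert x (j + 1) =
      altTerm x j - (x + 1 / 4) * (x + 3 / 4) / x ^ 2 * altTerm (x + 1) j := by
  have := j.cast_nonneg (α := ℝ)
  have ha : x + 1 / 2 + j ≠ 0 := by linarith
  have hb : -1 - 2 * x + j ≠ 0 := fun hz =>
    intCast_sub_two_mul_ne_zero h h₀ h' (j - 1) (by push_cast; linear_combination hz)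
  have hb' : -2 * x + j ≠ 0 := fun hz =>
    intCast_sub_two_mul_ne_zero h h₀ h' j (by push_cast; linear_combination hz)
  have hc : 1 / 2 - x + j ≠ 0 := by linarith
  have hd : 1 / 2 + (j : ℝ) ≠ 0 := by positivity
  have hcur : altTerm x j = hyperTerm (x + 1 / 2) (-1 - 2 * x) (1 / 2 - x) (1 / 2) j *
      ((-2 * x + j) * (-1 - 2 * x + j) / ((1 / 2 - x + j) * (1 / 2 + j))) := by
    rw [altTerm, hyperTerm_b_add_one (z := 1 - 2 * x) (b := -2 * x) (by ring) hb',
      hyperTerm_b_add_one (z := -2 * x) (b := -1 - 2 * x) (by ring) hb,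
      hyperTerm_c_add_one (z := 3 / 2 - x) (c := 1 / 2 - x) (by ring) hc,
      hyperTerm_d_add_one (z := 3 / 2) (d := 1 / 2) (by norm_num) hd]
    field_simp
  have hnext : altTerm (x + 1) j = hyperTerm (x + 1 / 2) (-1 - 2 * x) (1 / 2 - x) (1 / 2) j *
      ((x + 1 / 2 + j) / (1 / 2 + j)) := by
    rw [altTerm, hyperTerm_a_add_one (z := x + 1 + 1 / 2) (a := x + 1 / 2) (by ring) ha,
      hyperTerm_d_add_one (z := 3 / 2) (d := 1 / 2) (by norm_num) hd,
      show 1 - 2 * (x + 1) = -1 - 2 * x by ring, show 3 / 2 - (x + 1) = 1 / 2 - x by ring]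
    ring
  rw [altCert, altCert, hyperTerm_succ ha hb hc hd, hcur, hnext]
  generalize hyperTerm (x + 1 / 2) (-1 - 2 * x) (1 / 2 - x) (1 / 2) j = K
  generalize hp : 1 / 2 - x + (j : ℝ) = p, hq : 1 / 2 + (j : ℝ) = q at *
  push_cast
  field_simp
  subst hp hq
  ring

theorem tendsto_altCert (x : ℝ) : Tendsto (altCert x) atTop (𝓝 0) := by
  have h := hasPowerDecay_hyperTerm (x + 1 / 2) (-1 - 2 * x) (1 / 2 - x) (1 / 2)
  have h₀ := (h.tendsto_zero (by linarith)).mul_const ((20 * x + 3) * (1 + 2 * x) / (16 * x ^ 2))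
  have h₁ := (h.mul_natCast.tendsto_zero (by linarith)).mul_const ((16 * x + 3) / (8 * x ^ 2))
  have := h₀.sub h₁
  simp only [zero_mul, sub_zero] at this
  refine this.congr fun j => ?_
  rw [altCert]
  ring

theorem altWeight_mul_Gamma {x : ℝ} (h : -(1 / 2) < x) (h₀ : x ≠ 0) (h' : x < 1 / 2) :
    altWeight x * (Γ (x + 1 / 2) * Γ (1 - 2 * x) / (√π * Γ (1 / 2 - x))) =
      32 * x ^ 3 * baseTerm x := by
  have hA := (Gamma_pos_of_pos (show 0 < x + 1 / 2 by linarith)).ne'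
  have hB := (Gamma_pos_of_pos (show 0 < 1 / 2 - x by linarith)).ne'
  have hx := (Gamma_pos_of_pos (show 0 < x + 1 by linarith)).ne'
  have hΓ := Gamma_add_one h₀
  have hΓ₀ : Γ x ≠ 0 := right_ne_zero_of_mul (hΓ ▸ hx)
  have hsin : sin (π * x) ≠ 0 := sin_pi_mul_ne_zero_of_ne_intCast fun m hm =>
    intCast_sub_two_mul_ne_zero h h₀ h' (2 * m) (by push_cast; linear_combination -2 * hm)
  have hrefl : sin (π * x) * (Γ x * Γ (1 - x)) = π := by
    rw [Gamma_mul_Gamma_one_sub]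
    field_simp
  have hdup := Gamma_mul_Gamma_add_half (1 / 2 - x)
  rw [show 1 / 2 - x + 1 / 2 = 1 - x by ring, show 2 * (1 / 2 - x) = 1 - 2 * x by ring,
    show 1 - (1 - 2 * x) = -(-2 * x) by ring, rpow_neg two_pos.le] at hdup
  have hpow : (2 : ℝ) ^ (-2 * x) ≠ 0 := by positivity
  rw [altWeight, baseTerm_eq (by linarith) h₀, hΓ]
  generalize Γ (x + 1 / 2) = A, Γ (1 / 2 - x) = B, (2 : ℝ) ^ (-2 * x) = p, Γ (1 - x) = C,
    Γ (1 - 2 * x) = D, sin (π * x) = s, Γ x = G at *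
  calc _ = 2 * s ^ 2 * C * wzWeight x * p * (D * p⁻¹ * √π) / (√π ^ 2 * B) := by field_simp
    _ = 2 * (s * (G * C)) ^ 2 * wzWeight x * p / (π * G ^ 2) := by
      rw [← hdup, sq_sqrt pi_pos.le]
      field_simp
    _ = _ := by
      rw [hrefl]
      field_simp
      ring

theorem altWeight_mul_altCert_zero {x : ℝ} (h : -(1 / 2) < x) (h₀ : x ≠ 0) (h' : x < 1 / 2) :
    altWeight x * altCert x 0 = baseTerm x * (20 * x + 3) := by
  have : 1 + 2 * x ≠ 0 := by linarith
  have hlower : Γ (1 - 2 * x) = 2 * x * (1 + 2 * x) * Γ (-1 - 2 * x) := by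
    rw [Gamma_eq_mul_Gamma (b := 1 - 2 * x) (a := -2 * x) (by ring) (by simpa using h₀),
      Gamma_eq_mul_Gamma (b := -2 * x) (a := -1 - 2 * x) (by ring) (by linarith)]
    ring
  have hcert : altCert x 0 = Γ (x + 1 / 2) * Γ (1 - 2 * x) / (√π * Γ (1 / 2 - x)) *
      ((20 * x + 3) / (32 * x ^ 3)) := by
    rw [hlower, altCert, hyperTerm]
    simp only [Nat.cast_zero, add_zero, mul_zero, sub_zero, Gamma_one_half_eq]
    generalize Γ (x + 1 / 2) = A, Γ (-1 - 2 * x) = B, Γ (1 / 2 - x) = C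
    field_simp
    ring
  rw [hcert, ← mul_assoc, altWeight_mul_Gamma h h₀ h']
  field_simp

theorem altWeight_mul_tsum_altTerm_add {x : ℝ} (h : -(1 / 4) < x) (h₀ : x ≠ 0) (h' : x < 1 / 2) :
    altWeight x * ∑' j, altTerm x j + altWeight (x + 1) * ∑' j, altTerm (x + 1) j =
      baseTerm x * (20 * x + 3) := by
  have hrel := altCert_sub_altCert_succ (by linarith) h₀ h'
  have hsum : Summable fun j => altCert x j - altCert x (j + 1) := by
    simpa only [hrel] using (summable_altTerm x).sub ((summable_altTerm (x + 1)).mul_left _)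
  have htel := tsum_sub_succ_eq hsum (tendsto_altCert x)
  simp only [hrel] at htel
  rw [(summable_altTerm x).tsum_sub ((summable_altTerm (x + 1)).mul_left _), tsum_mul_left] at htel
  rw [altWeight_add_one h h₀, ← altWeight_mul_altCert_zero (by linarith) h₀ h', ← htel]
  ring

theorem tsum_baseTerm_eq_sub (x : ℝ) :
    ∑' m : ℕ, (-1 : ℝ) ^ m * (baseTerm (m + x) * (20 * (m + x) + 3)) =
      baseTerm x * (20 * x + 3) -
        ∑' m : ℕ, (-1 : ℝ) ^ m * (baseTerm (m + (x + 1)) * (20 * (m + (x + 1)) + 3)) := by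
  rw [(summable_baseTerm x).tsum_eq_zero_add, sub_eq_add_neg, ← tsum_neg, Nat.cast_zero, zero_add,
    pow_zero, one_mul]
  congr 1
  refine tsum_congr fun m => ?_
  rw [Nat.cast_succ, add_right_comm, ← add_assoc, pow_succ]
  ring

theorem tsum_baseTerm_eq_add_tsum_altTerm {x : ℝ} (h : -(1 / 4) < x) (h₀ : x ≠ 0)
    (h' : x < 1 / 2) :
    ∑' m : ℕ, (-1 : ℝ) ^ m * (baseTerm (m + x) * (20 * (m + x) + 3)) =
      8 * cos (2 * π * x) / (π * cos (π * x)) + altWeight x * ∑' j, altTerm x j := by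
  have hint (m : ℤ) : 2 * (x + 1) ≠ m := fun hm =>
    intCast_sub_two_mul_ne_zero (by linarith) h₀ h' (m - 2) (by push_cast; linear_combination -hm)
  have hcos : cos (π * (x + 1)) = -cos (π * x) := by rw [mul_add, mul_one, cos_add_pi]
  have hcos₂ : cos (2 * π * (x + 1)) = cos (2 * π * x) := by rw [mul_add, mul_one, cos_add_two_pi]
  have hnext := tsum_wzTerm_eq (by linarith) hint
  rw [hcos, hcos₂, mul_neg, div_neg] at hnext
  rw [tsum_baseTerm_eq_sub, tsum_baseTerm_eq (by linarith), hnext,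
    ← altWeight_mul_tsum_altTerm_add h h₀ h']
  ring

/-! ### The series on the right -/

/-- The Wilf–Zeilberger pair linking `∑ⱼ altTerm x j` to the series on the right, up to signs and
linear factors; its `k = 0` row is `altTerm x` and its `j = 0` column is `rhsTerm x`, up to
constants. -/
noncomputable def pairTerm (x : ℝ) (k : ℕ) : ℕ → ℝ := fun j =>
  Γ (2 * x + 1 / 2 + k) * Γ (x + 1 / 2 + k) / Γ (3 / 2 + k) *
    hyperTerm (x + 1 / 2 + k) (1 - 2 * x) (3 / 2 - x + k) (3 / 2 + k) j

/-- The summand of the series on the right. -/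
noncomputable def rhsTerm (x : ℝ) (n : ℕ) : ℝ :=
  (-1) ^ n * (pochR (1 / 2 + 2 * x) n * pochR (1 / 2 + x) n ^ 2 /
    (pochR (3 / 2 - x) n * pochR (1 / 2) n ^ 2)) * ((2 * n + 1 + x) / (2 * n + 1) ^ 2)

theorem pairTerm_sub_pairTerm_succ {x : ℝ} (h : -(1 / 4) < x) (h' : x < 1 / 2) (k j : ℕ) :
    pairTerm x k j * (1 + x + 2 * k + j) - pairTerm x k (j + 1) * (1 + x + 2 * k + (j + 1)) =
      pairTerm x k j * (1 / 2 + k) + pairTerm x (k + 1) j * (3 / 2 + k) := by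
  have := k.cast_nonneg (α := ℝ)
  have := j.cast_nonneg (α := ℝ)
  have ha : x + 1 / 2 + k + j ≠ 0 := by linarith
  have hc : 3 / 2 - x + k + j ≠ 0 := by linarith
  have hd : 3 / 2 + (k : ℝ) + j ≠ 0 := by positivity
  have hnext : pairTerm x (k + 1) j = pairTerm x k j *
      ((2 * x + 1 / 2 + k) * (x + 1 / 2 + k) * (x + 1 / 2 + k + j) /
        ((3 / 2 + k) * (3 / 2 - x + k + j) * (3 / 2 + k + j))) := by
    simp only [pairTerm]
    rw [hyperTerm_a_add_one (z := x + 1 / 2 + (k + 1 : ℕ)) (a := x + 1 / 2 + k)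
        (by push_cast; ring) ha,
      hyperTerm_c_add_one (z := 3 / 2 - x + (k + 1 : ℕ)) (c := 3 / 2 - x + k)
        (by push_cast; ring) hc,
      hyperTerm_d_add_one (z := 3 / 2 + (k + 1 : ℕ)) (d := 3 / 2 + k) (by push_cast; ring) hd,
      Gamma_eq_mul_Gamma (b := 2 * x + 1 / 2 + (k + 1 : ℕ)) (a := 2 * x + 1 / 2 + k)
        (by push_cast; ring) (by linarith),
      Gamma_eq_mul_Gamma (b := x + 1 / 2 + (k + 1 : ℕ)) (a := x + 1 / 2 + k)
        (by push_cast; ring) (by linarith),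
      Gamma_eq_mul_Gamma (b := 3 / 2 + (k + 1 : ℕ)) (a := 3 / 2 + k)
        (by push_cast; ring) (by positivity)]
    simp only [div_eq_mul_inv, mul_inv]
    ring
  have hsucc : pairTerm x k (j + 1) = pairTerm x k j *
      ((x + 1 / 2 + k + j) * (1 - 2 * x + j) / ((3 / 2 - x + k + j) * (3 / 2 + k + j))) := by
    simp only [pairTerm]
    rw [hyperTerm_succ ha (by linarith) hc hd]
    ring
  rw [hnext, hsucc]
  generalize pairTerm x k j = K
  generalize hp : 3 / 2 - x + k + (j : ℝ) = p, hq : 3 / 2 + (k : ℝ) + j = q at *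
  field_simp
  subst hp hq
  ring

theorem hasPowerDecay_pairTerm (x : ℝ) (k : ℕ) :
    ∃ L, HasPowerDecay (pairTerm x k) (3 / 2 + k) L := by
  have h := (hasPowerDecay_hyperTerm (x + 1 / 2 + k) (1 - 2 * x) (3 / 2 - x + k)
    (3 / 2 + k)).const_mul (Γ (2 * x + 1 / 2 + k) * Γ (x + 1 / 2 + k) / Γ (3 / 2 + k))
  rw [show 3 / 2 - x + k + (3 / 2 + k) - (x + 1 / 2 + k) - (1 - 2 * x) = 3 / 2 + k by ring] at h
  exact ⟨_, h⟩

theorem summable_pairTerm (x : ℝ) (k : ℕ) : Summable (pairTerm x k) :=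
  (hasPowerDecay_pairTerm x k).elim fun _ h => h.summable (by linarith [k.cast_nonneg (α := ℝ)])

theorem tendsto_pairTerm_mul (x : ℝ) (k : ℕ) :
    Tendsto (fun j => pairTerm x k j * (1 + x + 2 * k + j)) atTop (𝓝 0) := by
  obtain ⟨L, h⟩ := hasPowerDecay_pairTerm x k
  exact (h.mul (hasPowerDecay_const_add_natCast _)).tendsto_zero
    (by linarith [k.cast_nonneg (α := ℝ)])

theorem pairTerm_nonneg {x : ℝ} (h : -(1 / 4) < x) (h' : x < 1 / 2) (k j : ℕ) :
    0 ≤ pairTerm x k j := by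
  have := k.cast_nonneg (α := ℝ)
  have := Gamma_pos_of_pos (show 0 < 2 * x + 1 / 2 + k by linarith)
  have := Gamma_pos_of_pos (show 0 < x + 1 / 2 + k by linarith)
  have := Gamma_pos_of_pos (show 0 < 3 / 2 + (k : ℝ) by linarith)
  have := hyperTerm_nonneg (a := x + 1 / 2 + k) (b := 1 - 2 * x) (c := 3 / 2 - x + k)
    (d := 3 / 2 + k) (by linarith) (by linarith) (by linarith) (by linarith) j
  rw [pairTerm]
  positivity

theorem tsum_pairTerm_mul_le {x : ℝ} (h : -(1 / 4) < x) (h' : x < 1 / 2) {k : ℕ} (hk : 1 ≤ k) :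
    (∑' j, pairTerm x k j) * (1 / 2 + k) ≤
      Γ (1 - 2 * x) * (Γ (2 * x - 1 / 2 + k) / Γ (1 / 2 + k) *
        (Γ (x + 1 / 2 + k) / Γ (1 / 2 + k)) * (Γ (x + 1 / 2 + k) / Γ (3 / 2 - x + k))) := by
  have hk' : (1 : ℝ) ≤ k := by exact_mod_cast hk
  have := Gamma_pos_of_pos (show 0 < 2 * x + 1 / 2 + k by linarith)
  have := Gamma_pos_of_pos (show 0 < x + 1 / 2 + k by linarith)
  have := Gamma_pos_of_pos (show 0 < 1 / 2 + (k : ℝ) by linarith)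
  have := Gamma_pos_of_pos (show 0 < 3 / 2 + (k : ℝ) by linarith)
  have hle := tsum_hyperTerm_le (a := x + 1 / 2 + k) (b := 1 - 2 * x) (c := 3 / 2 - x + k)
    (d := 3 / 2 + k) (by linarith) (by linarith) (by linarith) (by linarith)
  have hd : 3 / 2 + (k : ℝ) - (1 - 2 * x) - 1 = 2 * x - 1 / 2 + k := by ring
  have hd₀ : 2 * x - 1 / 2 + k ≠ 0 := by linarith
  have hk₀ : 1 / 2 + (k : ℝ) ≠ 0 := by positivity
  simp only [pairTerm, tsum_mul_left]
  calc
    _ ≤ Γ (2 * x + 1 / 2 + k) * Γ (x + 1 / 2 + k) / Γ (3 / 2 + k) *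
          (Γ (x + 1 / 2 + k) / Γ (3 / 2 - x + k) *
            (Γ (1 - 2 * x) / ((3 / 2 + k - (1 - 2 * x) - 1) * Γ (3 / 2 + k - 1)))) *
          (1 / 2 + k) := by
        gcongr
    _ = _ := by
        rw [hd, Gamma_eq_mul_Gamma (b := 2 * x + 1 / 2 + k) (a := 2 * x - 1 / 2 + k) (by ring) hd₀,
          Gamma_eq_mul_Gamma (b := 3 / 2 + (k : ℝ)) (a := 1 / 2 + k) (by ring) hk₀,
          show 3 / 2 + (k : ℝ) - 1 = 1 / 2 + k by ring]
        generalize Γ (3 / 2 - x + k) = C, Γ (x + 1 / 2 + k) = A,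
          2 * x - 1 / 2 + (k : ℝ) = p, 1 / 2 + (k : ℝ) = q at *
        field_simp

theorem tendsto_tsum_pairTerm_mul {x : ℝ} (h : -(1 / 4) < x) (h' : x < 2 / 5) :
    Tendsto (fun k : ℕ => (∑' j, pairTerm x k j) * (1 / 2 + k)) atTop (𝓝 0) := by
  have hbound := (((hasPowerDecay_Gamma_div_Gamma (2 * x - 1 / 2) (1 / 2)).mul
    (hasPowerDecay_Gamma_div_Gamma (x + 1 / 2) (1 / 2))).mul
    (hasPowerDecay_Gamma_div_Gamma (x + 1 / 2) (3 / 2 - x))).const_mul (Γ (1 - 2 * x))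
  refine squeeze_zero' (.of_forall fun k => mul_nonneg
    (tsum_nonneg (pairTerm_nonneg h (by linarith) k)) (by positivity)) ?_
    (hbound.tendsto_zero (by linarith))
  filter_upwards [eventually_ge_atTop 1] with k hk
  exact tsum_pairTerm_mul_le h (by linarith) hk

theorem Gamma_three_halves : Γ (3 / 2) = √π / 2 := by
  rw [Gamma_eq_mul_Gamma (a := 1 / 2) (by norm_num) (by norm_num), Gamma_one_half_eq]
  ring

theorem pairTerm_zero_left (x : ℝ) (j : ℕ) :
    pairTerm x 0 j = 2 * Γ (2 * x + 1 / 2) * Γ (x + 1 / 2) / √π * altTerm x j := by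
  simp only [pairTerm, altTerm, Nat.cast_zero, add_zero, Gamma_three_halves]
  field_simp

theorem pairTerm_zero_right_mul {x : ℝ} (h : -(1 / 4) < x) (h' : x < 1 / 2) (n : ℕ) :
    (-1) ^ n * (pairTerm x n 0 * (1 + x + 2 * n)) =
      4 * Γ (2 * x + 1 / 2) * Γ (x + 1 / 2) ^ 2 * Γ (1 - 2 * x) / (π * Γ (3 / 2 - x)) *
        rhsTerm x n := by
  have hpoch {a : ℝ} (ha : 0 < a) : Γ (a + n) = pochR a n * Γ a :=
    Gamma_add_natCast (fun m => by linarith [m.cast_nonneg (α := ℝ)]) n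
  have hn : 1 / 2 + (n : ℝ) ≠ 0 := by positivity
  have hpi : √π * √π = π := mul_self_sqrt pi_pos.le
  rw [pairTerm, hyperTerm, rhsTerm, Nat.cast_zero, add_zero, add_zero, add_zero, add_zero,
    Gamma_eq_mul_Gamma (b := 3 / 2 + (n : ℝ)) (a := 1 / 2 + n) (by ring) hn,
    hpoch (a := 2 * x + 1 / 2) (by linarith), hpoch (a := x + 1 / 2) (by linarith),
    hpoch (a := 3 / 2 - x) (by linarith), hpoch one_half_pos, Gamma_one_half_eq,
    add_comm (1 / 2) (2 * x), add_comm (1 / 2) x, show 2 * (n : ℝ) + 1 = 2 * (1 / 2 + n) by ring,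
    show 1 + x + 2 * (n : ℝ) = 2 * (1 / 2 + n) + x by ring]
  generalize √π = s at hpi ⊢
  generalize 1 / 2 + (n : ℝ) = q
  rw [← hpi]
  ring

theorem summable_rhsTerm {x : ℝ} (h : -(1 / 4) < x) (h' : x < 1 / 5) : Summable (rhsTerm x) := by
  have hdecay := ((((hasPowerDecay_Gamma_div_Gamma (2 * x + 1 / 2) (3 / 2)).mul
    (hasPowerDecay_Gamma_div_Gamma (x + 1 / 2) (3 / 2))).mul
    (hasPowerDecay_Gamma_div_Gamma (x + 1 / 2) (3 / 2 - x))).mul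
    (hasPowerDecay_const_add_natCast ((1 + x) / 2))).const_mul (2 * Γ (1 - 2 * x))
  have hpair : Summable fun n : ℕ => (-1 : ℝ) ^ n * (pairTerm x n 0 * (1 + x + 2 * n)) := by
    refine .of_abs ((hdecay.summable (by linarith)).abs.congr fun n => ?_)
    rw [abs_mul ((-1) ^ n), abs_neg_one_pow, one_mul, pairTerm, hyperTerm, Nat.cast_zero]
    congr 1
    ring_nf
  simp only [pairTerm_zero_right_mul h (h'.trans (by norm_num))] at hpair
  refine (summable_mul_left_iff (ne_of_gt ?_)).1 hpair
  have := Gamma_pos_of_pos (show 0 < 2 * x + 1 / 2 by linarith)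
  have := Gamma_pos_of_pos (show 0 < x + 1 / 2 by linarith)
  have := Gamma_pos_of_pos (show 0 < 1 - 2 * x by linarith)
  have := Gamma_pos_of_pos (show 0 < 3 / 2 - x by linarith)
  positivity

theorem tsum_altTerm_eq {x : ℝ} (h : -(1 / 4) < x) (h' : x < 1 / 5) :
    ∑' j, altTerm x j =
      4 * Γ (x + 1 / 2) * Γ (1 - 2 * x) / (√π * Γ (3 / 2 - x)) * ∑' n, rhsTerm x n := by
  have hwz := tendsto_sum_range_of_wz (L := 0)
    (F := fun k j => (-1) ^ k * (pairTerm x k j * (1 + x + 2 * k + j)))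
    (H := fun k j => (-1) ^ k * (pairTerm x k j * (1 / 2 + k))) ?_ ?_ ?_ ?_
  · have := Gamma_pos_of_pos (show 0 < 2 * x + 1 / 2 by linarith)
    have := Gamma_pos_of_pos (show 0 < x + 1 / 2 by linarith)
    have hpi : √π * √π = π := mul_self_sqrt pi_pos.le
    have : 0 < √π := sqrt_pos.2 pi_pos
    simp only [Nat.cast_zero, add_zero, pow_zero, one_mul, sub_zero, pairTerm_zero_left,
      pairTerm_zero_right_mul h (h'.trans (by norm_num)), tsum_mul_left, tsum_mul_right] at hwz
    have hcol := tendsto_nhds_unique hwz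
      ((summable_rhsTerm h h').mul_left _).hasSum.tendsto_sum_nat
    rw [tsum_mul_left] at hcol
    clear hwz
    generalize ∑' j, altTerm x j = A, ∑' n, rhsTerm x n = R, Γ (3 / 2 - x) = C,
      Γ (2 * x + 1 / 2) = D, Γ (x + 1 / 2) = B, √π = s at *
    rw [← hpi] at hcol
    field_simp at hcol ⊢
    linear_combination hcol
  · intro k j
    have hrel := pairTerm_sub_pairTerm_succ h (by linarith) k j
    push_cast
    rw [pow_succ]
    linear_combination (-1) ^ k * hrel
  · exact fun k => by simpa using (tendsto_pairTerm_mul x k).const_mul ((-1) ^ k)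
  · exact fun k => ((summable_pairTerm x k).mul_right _).mul_left _
  · simp only [tsum_mul_left, tsum_mul_right]
    exact tendsto_neg_one_pow_mul (tendsto_tsum_pairTerm_mul h (by linarith))

theorem altWeight_mul_tsum_altTerm {x : ℝ} (h : -(1 / 4) < x) (h₀ : x ≠ 0) (h' : x < 1 / 5) :
    altWeight x * ∑' j, altTerm x j =
      8 * baseTerm x * (32 * x ^ 3 / (1 - 2 * x)) * ∑' n, rhsTerm x n := by
  have hweight := altWeight_mul_Gamma (by linarith) h₀ (by linarith)
  have hx : 1 / 2 - x ≠ 0 := by linarith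
  rw [tsum_altTerm_eq h h', Gamma_eq_mul_Gamma (b := 3 / 2 - x) (a := 1 / 2 - x) (by ring) hx]
  calc
    _ = altWeight x * (Γ (x + 1 / 2) * Γ (1 - 2 * x) / (√π * Γ (1 / 2 - x))) *
          (4 / (1 / 2 - x) * ∑' n, rhsTerm x n) := by
        generalize 1 / 2 - x = p
        ring
    _ = _ := by
        rw [hweight, show 1 - 2 * x = 2 * (1 / 2 - x) by ring]
        generalize 1 / 2 - x = p
        ring

/-! ### The value at zero -/

theorem tsum_wzTerm_one : ∑' j, wzTerm 1 j = 2 * π - 16 / 3 := by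
  have hsq : √π ^ 2 = π := sq_sqrt pi_pos.le
  have hneg : Γ (-(1 / 2)) = -2 * √π := by
    have h := Gamma_eq_mul_Gamma (b := 1 / 2) (a := -(1 / 2)) (by norm_num) (by norm_num)
    rw [Gamma_one_half_eq] at h
    linarith
  have hgauss : ∑' j, hyperTerm (1 / 2) (-(1 / 2)) 2 1 j = -(16 / 3) := by
    rw [tsum_hyperTerm_one (by norm_num) (by norm_num)
      (by rw [mul_one_div, sin_pi_div_two]; exact one_ne_zero)
      (by rw [mul_neg, mul_one_div, sin_neg, sin_pi_div_two]; norm_num)]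
    norm_num [Gamma_one_half_eq, hneg, Gamma_three_halves,
      Gamma_eq_mul_Gamma (b := 5 / 2) (a := 3 / 2) (by norm_num) (by norm_num)]
    field_simp
    norm_num
  have hsucc (j : ℕ) : hyperTerm (1 / 2) (-(1 / 2)) 2 1 (j + 1) = wzTerm 1 j := by
    rw [wzTerm, hyperTerm, hyperTerm]
    push_cast
    ring_nf
  have hzero : hyperTerm (1 / 2) (-(1 / 2)) 2 1 0 = -(2 * π) := by
    norm_num [hyperTerm, Gamma_one_half_eq, hneg]
    linear_combination 2 * hsq
  have hsplit := (summable_hyperTerm (a := 1 / 2) (b := -(1 / 2)) (c := 2) (d := 1)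
    (by norm_num)).tsum_eq_zero_add
  simp only [hgauss, hzero, hsucc] at hsplit
  linarith

theorem wzWeight_one : wzWeight 1 = 3 / (2 * π) := by
  have h₂ : √2 * √2 = 2 := mul_self_sqrt zero_le_two
  rw [wzWeight, Gamma_eq_mul_Gamma (add_comm 1 (1 / 4)) (by norm_num),
    Gamma_eq_mul_Gamma (add_comm 1 (3 / 4)) (by norm_num),
    Gamma_eq_mul_Gamma (add_comm 1 (1 / 2)) (by norm_num), Gamma_one_half_eq, Gamma_one]
  calc
    _ = 3 / 4 * √2 * (Γ (1 / 4) * Γ (3 / 4)) / π ^ 2 := by field_simp; ring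
    _ = 3 / 4 * (√2 * √2) / π := by rw [Gamma_one_quarter_mul_Gamma_three_quarters]; field_simp
    _ = _ := by rw [h₂]; ring

theorem tsum_baseTerm_zero :
    ∑' m : ℕ, (-1 : ℝ) ^ m * (baseTerm (m + 0) * (20 * (m + 0) + 3)) = 8 / π := by
  have hbase : baseTerm 0 = 1 := by
    simp [baseTerm, pochG, (Gamma_pos_of_pos _).ne']
  rw [tsum_baseTerm_eq_sub, zero_add, tsum_baseTerm_eq (by norm_num), tsum_wzTerm_one,
    wzWeight_one, hbase]
  field_simp
  ring

theorem tsum_baseTerm_eq_add_tsum_rhsTerm {x : ℝ} (h : -(1 / 4) < x) (h' : x < 1 / 5) :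
    ∑' m : ℕ, (-1 : ℝ) ^ m * (baseTerm (m + x) * (20 * (m + x) + 3)) =
      8 * cos (2 * π * x) / (π * cos (π * x)) +
        8 * baseTerm x * (32 * x ^ 3 / (1 - 2 * x)) * ∑' n, rhsTerm x n := by
  rcases eq_or_ne x 0 with rfl | h₀
  · rw [tsum_baseTerm_zero]
    simp
  · rw [tsum_baseTerm_eq_add_tsum_altTerm h h₀ (by linarith), altWeight_mul_tsum_altTerm h h₀ h']

theorem identity3_general (x : ℝ) (hx1 : -(1 / 4) < x) (hx2 : x < 1 / 5) :
    Summable (fun n : ℕ => (-1 : ℝ) ^ n * (2 : ℝ) ^ (-(2 : ℝ) * (n + x)) *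
      (pochG (1 / 2) (n + x) * pochG (1 / 4) (n + x) * pochG (3 / 4) (n + x) /
        pochG 1 (n + x) ^ 3) * (20 * (n + x) + 3)) ∧
    Summable (fun n : ℕ => (-1 : ℝ) ^ n *
      (pochR (1 / 2 + 2 * x) n * pochR (1 / 2 + x) n ^ 2 /
        (pochR (3 / 2 - x) n * pochR (1 / 2) n ^ 2)) *
      ((2 * n + 1 + x) / (2 * n + 1) ^ 2)) ∧
    1 / 8 * ∑' n : ℕ, (-1 : ℝ) ^ n * (2 : ℝ) ^ (-(2 : ℝ) * (n + x)) *
        (pochG (1 / 2) (n + x) * pochG (1 / 4) (n + x) * pochG (3 / 4) (n + x) /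
          pochG 1 (n + x) ^ 3) * (20 * (n + x) + 3) =
      1 / π * (cos (2 * π * x) / cos (π * x)) +
        (4 : ℝ) ^ (-x) * (pochG (1 / 2) x * pochG (1 / 4) x * pochG (3 / 4) x / pochG 1 x ^ 3) *
          (32 * x ^ 3 / (1 - 2 * x)) *
          ∑' n : ℕ, (-1 : ℝ) ^ n *
            (pochR (1 / 2 + 2 * x) n * pochR (1 / 2 + x) n ^ 2 /
              (pochR (3 / 2 - x) n * pochR (1 / 2) n ^ 2)) *
            ((2 * n + 1 + x) / (2 * n + 1) ^ 2) := by
  have hleft (n : ℕ) : (-1 : ℝ) ^ n * (2 : ℝ) ^ (-(2 : ℝ) * (n + x)) *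
      (pochG (1 / 2) (n + x) * pochG (1 / 4) (n + x) * pochG (3 / 4) (n + x) /
        pochG 1 (n + x) ^ 3) * (20 * (n + x) + 3) =
      (-1) ^ n * (baseTerm (n + x) * (20 * (n + x) + 3)) := by
    rw [baseTerm]
    ring
  have hpow : (4 : ℝ) ^ (-x) = 2 ^ (-2 * x) := by
    rw [show (4 : ℝ) = 2 ^ (2 : ℝ) by norm_num, ← rpow_mul zero_le_two, neg_mul_comm]
  simp only [hleft]
  refine ⟨summable_baseTerm x, summable_rhsTerm hx1 hx2, ?_⟩
  rw [tsum_baseTerm_eq_add_tsum_rhsTerm hx1 hx2, baseTerm, hpow]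
  simp only [rhsTerm]
  ring

/-- **Identity 3.** For `-1/5 < x < 1/5`,
`(1/8) ∑_{n≥0} (-1)^n 2^{-2(n+x)} (1/2)_{n+x}(1/4)_{n+x}(3/4)_{n+x}/(1)_{n+x}³ (20(n+x)+3)
 = (1/π) cos 2πx / cos πx + 4^{-x} (1/2)_x(1/4)_x(3/4)_x/(1)_x³ · 32x³/(1-2x) ·
   ∑_{n≥0} (-1)^n (1/2+2x)_n (1/2+x)_n² / ((3/2-x)_n (1/2)_n²) · (2n+1+x)/(2n+1)²`. -/
theorem identity3 (x : ℝ) (hx1 : -1/5 < x) (hx2 : x < 1/5) :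
    Summable (fun n : ℕ =>
      (-1 : ℝ) ^ n * (2 : ℝ) ^ (-(2 : ℝ) * ((n : ℝ) + x)) *
        (pochG (1/2) ((n : ℝ) + x) * pochG (1/4) ((n : ℝ) + x) * pochG (3/4) ((n : ℝ) + x) /
          pochG 1 ((n : ℝ) + x) ^ 3) *
        (20 * ((n : ℝ) + x) + 3)) ∧
    Summable (fun n : ℕ =>
      (-1 : ℝ) ^ n *
        (pochR (1/2 + 2*x) n * pochR (1/2 + x) n ^ 2 /
          (pochR (3/2 - x) n * pochR (1/2) n ^ 2)) *
        ((2 * (n : ℝ) + 1 + x) / (2 * (n : ℝ) + 1) ^ 2)) ∧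
    (1/8 : ℝ) * (∑' n : ℕ,
        (-1 : ℝ) ^ n * (2 : ℝ) ^ (-(2 : ℝ) * ((n : ℝ) + x)) *
          (pochG (1/2) ((n : ℝ) + x) * pochG (1/4) ((n : ℝ) + x) * pochG (3/4) ((n : ℝ) + x) /
            pochG 1 ((n : ℝ) + x) ^ 3) *
          (20 * ((n : ℝ) + x) + 3))
      = (1 / Real.pi) * (Real.cos (2 * Real.pi * x) / Real.cos (Real.pi * x)) +
        (4 : ℝ) ^ (-x) *
          (pochG (1/2) x * pochG (1/4) x * pochG (3/4) x / pochG 1 x ^ 3) *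
          (32 * x ^ 3 / (1 - 2 * x)) *
          ∑' n : ℕ,
            (-1 : ℝ) ^ n *
              (pochR (1/2 + 2*x) n * pochR (1/2 + x) n ^ 2 /
                (pochR (3/2 - x) n * pochR (1/2) n ^ 2)) *
              ((2 * (n : ℝ) + 1 + x) / (2 * (n : ℝ) + 1) ^ 2) :=
  identity3_general x (by linarith) hx2
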